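/- Let μ be a finite positive Borel measure on [0,1). Then the operator H_μ is well defined on the Hardy space H^1 and bounded from H^1 into itself if and only if μ is a 1-logarithmic 1-Carleson measure. -/

import Mathlib

open MeasureTheory Set Metric ENNReal

noncomputable section

namespace PaperHankel

/-- The moment of order `n` of a measure on `[0,1)`:  `μ_n = ∫_{[0,1)} t^n dμ(t)`. -/
def mom (μ : Measure ℝ) (n : ℕ) : ℝ := ∫ t in Ico (0:ℝ) 1, t ^ n ∂μ

/-- The `n`-th Taylor coefficient of `f` at `0`. -/
def tc (f : ℂ → ℂ) (n : ℕ) : ℂ := iteratedDeriv n f 0 / n.factorial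

/-- The `n`-th Taylor coefficient of `H_μ f`, namely `∑_k μ_{n+k} a_k`. -/
def hmuCoeff (μ : Measure ℝ) (f : ℂ → ℂ) (n : ℕ) : ℂ :=
  ∑' k : ℕ, (mom μ (n + k) : ℂ) * tc f k

/-- `H_μ f` is well defined: each coefficient series converges absolutely, and the resulting
power series has radius of convergence at least `1`. -/
def HmuWD (μ : Measure ℝ) (f : ℂ → ℂ) : Prop :=
  (∀ n : ℕ, Summable fun k : ℕ => ‖(mom μ (n + k) : ℂ) * tc f k‖) ∧
  ∀ z ∈ ball (0:ℂ) 1, Summable fun n : ℕ => ‖hmuCoeff μ f n * z ^ n‖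

/-- The generalized Hilbert operator induced by the Hankel matrix of moments of `μ`. -/
def Hmu (μ : Measure ℝ) (f : ℂ → ℂ) : ℂ → ℂ :=
  fun z => ∑' n : ℕ, hmuCoeff μ f n * z ^ n

/-- `I_μ f` is well defined: the defining integral converges absolutely for every `z ∈ 𝔻`. -/
def ImuWD (μ : Measure ℝ) (f : ℂ → ℂ) : Prop :=
  ∀ z ∈ ball (0:ℂ) 1, IntegrableOn (fun t : ℝ => f t / (1 - t * z)) (Ico (0:ℝ) 1) μ

/-- The integral operator `I_μ f (z) = ∫_{[0,1)} f(t)/(1-tz) dμ(t)`. -/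
def Imu (μ : Measure ℝ) (f : ℂ → ℂ) : ℂ → ℂ :=
  fun z => ∫ t in Ico (0:ℝ) 1, f t / (1 - t * z) ∂μ

/-- The `p`-th circle mean `M_p(r,f)` raised into the Hardy norm shape:
`((1/2π) ∫_0^{2π} |f(r e^{iθ})|^p dθ)^{1/p}`. -/
def circMean (p : ℝ) (f : ℂ → ℂ) (r : ℝ) : ℝ :=
  ((2 * Real.pi)⁻¹ * ∫ θ in (0:ℝ)..(2 * Real.pi),
      ‖f (r * Complex.exp (θ * Complex.I))‖ ^ p) ^ (1 / p)

/-- Membership in the Hardy space `H^p`. -/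
def MemHardy (p : ℝ) (f : ℂ → ℂ) : Prop :=
  DifferentiableOn ℂ f (ball (0:ℂ) 1) ∧ ∃ M : ℝ, ∀ r ∈ Ico (0:ℝ) 1, circMean p f r ≤ M

/-- The `H^p` norm. -/
def hardyNorm (p : ℝ) (f : ℂ → ℂ) : ℝ :=
  sSup {x : ℝ | ∃ r ∈ Ico (0:ℝ) 1, x = circMean p f r}

/-- Membership in `H^∞`: analytic and bounded on the unit disc. -/
def MemHinf (f : ℂ → ℂ) : Prop :=
  DifferentiableOn ℂ f (ball (0:ℂ) 1) ∧ ∃ M : ℝ, ∀ z ∈ ball (0:ℂ) 1, ‖f z‖ ≤ M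

/-- The `H^∞` norm. -/
def hinfNorm (f : ℂ → ℂ) : ℝ := sSup {x : ℝ | ∃ z ∈ ball (0:ℂ) 1, x = ‖f z‖}

/-- The mean `M_2(r,g) = ((1/2π) ∫_0^{2π} |g(r e^{iθ})|² dθ)^{1/2}`. -/
def M2 (g : ℂ → ℂ) (r : ℝ) : ℝ :=
  Real.sqrt ((2 * Real.pi)⁻¹ * ∫ θ in (0:ℝ)..(2 * Real.pi),
      ‖g (r * Complex.exp (θ * Complex.I))‖ ^ 2)

/-- Membership in the mean Lipschitz space `Λ²_{1/2}`:
`M_2(r,f') = O((1-r)^{-1/2})` as `r → 1⁻`. -/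
def MemLambda (f : ℂ → ℂ) : Prop :=
  DifferentiableOn ℂ f (ball (0:ℂ) 1) ∧
  ∃ C : ℝ, ∀ r ∈ Ico (0:ℝ) 1, Real.sqrt (1 - r) * M2 (deriv f) r ≤ C

/-- The norm on `Λ²_{1/2}`. -/
def lambdaNorm (f : ℂ → ℂ) : ℝ :=
  ‖f 0‖ + sSup {x : ℝ | ∃ r ∈ Ico (0:ℝ) 1, x = Real.sqrt (1 - r) * M2 (deriv f) r}

/-- `∫_𝔻 |f'(z)|² g(z,a)^s dA(z)` with `g(z,a) = log |(1- ā z)/(z-a)|` and `dA` the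
normalized area measure, computed as a lower integral in `[0,∞]`. -/
def qsInt (s : ℝ) (f : ℂ → ℂ) (a : ℂ) : ℝ≥0∞ :=
  (ENNReal.ofReal Real.pi)⁻¹ * ∫⁻ z in ball (0:ℂ) 1,
    ENNReal.ofReal (‖deriv f z‖ ^ 2 * (Real.log ‖(1 - (starRingEnd ℂ) a * z) / (z - a)‖) ^ s)

/-- Membership in `Q_s`: analytic on `𝔻` with `ρ_{Q_s}(f)² = sup_{a ∈ 𝔻} ∫ ... < ∞`. -/
def MemQs (s : ℝ) (f : ℂ → ℂ) : Prop :=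
  DifferentiableOn ℂ f (ball (0:ℂ) 1) ∧ (⨆ a ∈ ball (0:ℂ) 1, qsInt s f a) < ⊤

/-- The norm on `Q_s`, `‖f‖ = |f(0)| + ρ_{Q_s}(f)`. -/
def qsNorm (s : ℝ) (f : ℂ → ℂ) : ℝ :=
  ‖f 0‖ + Real.sqrt (⨆ a ∈ ball (0:ℂ) 1, qsInt s f a).toReal

/-- The condition `∫_{[0,1)} tⁿ log(1/(1-t)) dμ(t) = O(1/n)`, stated with the lower
integral so that in particular the integrals are finite. -/
def LogMomentBigO (μ : Measure ℝ) : Prop :=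
  ∃ C > 0, ∀ n : ℕ, 1 ≤ n →
    (∫⁻ t in Ico (0:ℝ) 1, ENNReal.ofReal (t ^ n * Real.log (1 / (1 - t))) ∂μ) ≤
      ENNReal.ofReal (C / n)

/-- Membership in the Bloch space. -/
def MemBloch (f : ℂ → ℂ) : Prop :=
  DifferentiableOn ℂ f (ball (0:ℂ) 1) ∧
  ∃ M : ℝ, ∀ z ∈ ball (0:ℂ) 1, (1 - ‖z‖ ^ 2) * ‖deriv f z‖ ≤ M

/-- The Bloch norm `‖f‖ = |f(0)| + ρ_B(f)`. -/
def blochNorm (f : ℂ → ℂ) : ℝ :=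
  ‖f 0‖ + sSup {x : ℝ | ∃ z ∈ ball (0:ℂ) 1, x = (1 - ‖z‖ ^ 2) * ‖deriv f z‖}

/-- Membership in the Besov space `B^p`. -/
def MemBesov (p : ℝ) (f : ℂ → ℂ) : Prop :=
  DifferentiableOn ℂ f (ball (0:ℂ) 1) ∧
  IntegrableOn (fun z : ℂ => (1 - ‖z‖ ^ 2) ^ (p - 2) * ‖deriv f z‖ ^ p) (ball (0:ℂ) 1) volume

/-- The Besov norm `‖f‖ = |f(0)| + ρ_p(f)`. -/
def besovNorm (p : ℝ) (f : ℂ → ℂ) : ℝ :=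
  ‖f 0‖ + (Real.pi⁻¹ *
    ∫ z in ball (0:ℂ) 1, (1 - ‖z‖ ^ 2) ^ (p - 2) * ‖deriv f z‖ ^ p) ^ (1 / p)

/-- `μ` is an `α`-logarithmic `s`-Carleson measure on `[0,1)`. -/
def IsLogCarleson (μ : Measure ℝ) (α s : ℝ) : Prop :=
  ∃ C > 0, ∀ t ∈ Ico (0:ℝ) 1,
    (μ (Ico t 1)).toReal * Real.log (2 / (1 - t)) ^ α ≤ C * (1 - t) ^ s

/-- `μ` is an `s`-Carleson measure on `[0,1)`. -/
def IsCarleson (μ : Measure ℝ) (s : ℝ) : Prop :=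
  ∃ C > 0, ∀ t ∈ Ico (0:ℝ) 1, (μ (Ico t 1)).toReal ≤ C * (1 - t) ^ s

/-!
Both directions rest on Hardy's inequality `∑ |a_k| / (k + 1) ≤ 8 ‖f‖` for `f = ∑ a_k z^k` in `H^1`.
A polynomial `f` factors as `g h` in the disc algebra with `|g|² = |h|² = |f|` on the unit circle,
and Hilbert's inequality for the coefficients of `g` and `h` bounds the sum; dilations and partial
sums then give the general case.

If `μ` is `1`-logarithmic `1`-Carleson, then `H_μ f(z) = ∫ f(t) / (1 - t z) dμ(t)`. Writing
`1 / (1 - t z)` as an integral of its derivative reduces its circle means to Poisson kernels and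
bounds the mean of its modulus by `2 log (2 / (1 - t))`, so the `H^1` norm of `H_μ f` is at most
`2 ∫ |f(t)| log (2 / (1 - t)) dμ(t)`. Bounding `|f(t)|` by `∑ |a_k| t^k` leaves the moments
`∫ t^k log (2 / (1 - t)) dμ(t)`, which an integration by parts shows to be `O(1 / (k + 1))`, and
Hardy's inequality for `f` concludes.

Conversely, `f_a(z) = (1 - a²) / (1 - a z)²` has norm at most `1` and the `n`-th coefficient of
`H_μ f_a` is at least `a^n μ[a, 1) / (1 - a²)`. Hardy's inequality, applied this time to `H_μ f_a`,
yields `μ[a, 1) ∑ a^n / (n + 1) = O(1 - a)`, and the sum is comparable to `log (2 / (1 - a))`.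
-/

section PowerSeries

variable {c : ℕ → ℂ} {f : ℂ → ℂ}

lemma hasFPowerSeriesOnBall_ofScalars
    (h : ∀ z ∈ ball (0 : ℂ) 1, HasSum (fun n => c n * z ^ n) (f z)) :
    HasFPowerSeriesOnBall f (.ofScalars ℂ c) 0 1 where
  r_le := by
    refine ENNReal.le_of_forall_nnreal_lt fun r hr => ?_
    have hr1 : (r : ℝ) < 1 := by exact_mod_cast hr
    refine FormalMultilinearSeries.le_radius_of_summable_norm _ ?_
    simpa using (h (r : ℝ) (by simpa using hr1)).summable.norm
  r_pos := one_pos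
  hasSum {y} hy := by
    rw [← ENNReal.ofReal_one, eball_ofReal] at hy
    simpa [FormalMultilinearSeries.ofScalars_apply_eq, mul_comm] using h y hy

lemma differentiableOn_ball_of_hasSum
    (h : ∀ z ∈ ball (0 : ℂ) 1, HasSum (fun n => c n * z ^ n) (f z)) :
    DifferentiableOn ℂ f (ball 0 1) := by
  simpa [← ENNReal.ofReal_one, eball_ofReal] using
    (hasFPowerSeriesOnBall_ofScalars h).differentiableOn

lemma hasSum_tc (hf : DifferentiableOn ℂ f (ball 0 1)) {z : ℂ} (hz : z ∈ ball (0 : ℂ) 1) :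
    HasSum (fun n => tc f n * z ^ n) (f z) := by
  refine (Complex.hasSum_taylorSeries_on_ball hf hz).congr_fun fun n => ?_
  simp only [tc, sub_zero, smul_eq_mul]
  ring

lemma tc_eq_of_hasSum (h : ∀ z ∈ ball (0 : ℂ) 1, HasSum (fun n => c n * z ^ n) (f z)) :
    tc f = c :=
  FormalMultilinearSeries.ofScalars_series_injective ℂ ℂ <|
    (hasFPowerSeriesOnBall_ofScalars fun _ => hasSum_tc
      (differentiableOn_ball_of_hasSum h)).hasFPowerSeriesAt.eq_formalMultilinearSeries
      (hasFPowerSeriesOnBall_ofScalars h).hasFPowerSeriesAt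

end PowerSeries

section CircleAverage

open Real (circleAverage)

lemma circMean_one_eq_circleAverage (f : ℂ → ℂ) (r : ℝ) :
    circMean 1 f r = circleAverage (fun z => ‖f z‖) 0 r := by
  simp [circMean, Real.circleAverage_def, circleMap]

lemma tendsto_circleAverage_comp_sum_range {a : ℕ → ℂ} (ha : Summable fun n => ‖a n‖)
    {φ : ℂ → ℝ} (hφ : Continuous φ) :
    Filter.Tendsto
      (fun n => circleAverage (fun z => φ (∑ k ∈ Finset.range n, a k * z ^ k)) 0 1) Filter.atTop
      (nhds (circleAverage (fun z => φ (∑' k, a k * z ^ k)) 0 1)) := by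
  have hnorm (θ : ℝ) (k : ℕ) : ‖a k * circleMap 0 1 θ ^ k‖ = ‖a k‖ := by simp
  obtain ⟨C, hC⟩ := (isCompact_closedBall (0 : ℂ) (∑' k, ‖a k‖)).exists_bound_of_continuousOn
    hφ.continuousOn
  refine (intervalIntegral.tendsto_integral_filter_of_dominated_convergence (fun _ => C) ?_ ?_
    intervalIntegrable_const ?_).const_smul _
  · exact .of_forall fun n => (Continuous.aestronglyMeasurable (by fun_prop))
  · refine .of_forall fun n => .of_forall fun θ _ => hC _ (mem_closedBall_zero_iff.2 ?_)
    refine (norm_sum_le _ _).trans ?_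
    simp only [hnorm]
    exact ha.sum_le_tsum _ fun k _ => norm_nonneg _
  · refine .of_forall fun θ _ => (hφ.tendsto _).comp ?_
    exact (Summable.of_norm (by simpa only [hnorm] using ha)).hasSum.tendsto_sum_nat

end CircleAverage

section RieszFactorization

open scoped ComplexConjugate

/-- The Riesz factorisation `F = g h` of a function in the disc algebra into two factors of the disc
algebra with `|g|² = |h|² = |F|` on the unit circle; it reduces `H¹` estimates to `H²` ones. -/
def HasRieszFactorization (F : ℂ → ℂ) : Prop :=
  ∃ g h : ℂ → ℂ, DiffContOnCl ℂ g (ball 0 1) ∧ DiffContOnCl ℂ h (ball 0 1) ∧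
    EqOn F (g * h) (closedBall 0 1) ∧ ∀ z ∈ sphere (0 : ℂ) 1, ‖g z‖ ^ 2 = ‖F z‖ ∧ ‖h z‖ ^ 2 = ‖F z‖

namespace HasRieszFactorization

variable {F G g : ℂ → ℂ}

lemma mul (hF : HasRieszFactorization F) (hG : HasRieszFactorization G) :
    HasRieszFactorization (F * G) := by
  obtain ⟨g₁, h₁, hg₁, hh₁, heq₁, hnorm₁⟩ := hF
  obtain ⟨g₂, h₂, hg₂, hh₂, heq₂, hnorm₂⟩ := hG
  refine ⟨g₁ * g₂, h₁ * h₂, hg₁.smul hg₂, hh₁.smul hh₂, fun z hz => ?_, fun z hz => ?_⟩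
  · simp only [Pi.mul_apply, heq₁ hz, heq₂ hz]
    ring
  · simp [mul_pow, hnorm₁ z hz, hnorm₂ z hz]

lemma congr (hF : HasRieszFactorization F) (h : EqOn F G (closedBall 0 1)) :
    HasRieszFactorization G := by
  obtain ⟨g, k, hg, hk, heq, hnorm⟩ := hF
  exact ⟨g, k, hg, hk, h.symm.trans heq,
    fun z hz => h (sphere_subset_closedBall hz) ▸ hnorm z hz⟩

lemma sq (hg : DiffContOnCl ℂ g (ball 0 1)) : HasRieszFactorization (g ^ 2) :=
  ⟨g, g, hg, hg, fun z _ => by simp [pow_two], fun z _ => by simp⟩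

lemma of_norm_eq_one (hg : DiffContOnCl ℂ g (ball 0 1)) (h : ∀ z ∈ sphere (0 : ℂ) 1, ‖g z‖ = 1) :
    HasRieszFactorization g :=
  ⟨g, 1, hg, diffContOnCl_const, fun z _ => by simp, fun z hz => by simp [h z hz]⟩

lemma const (a : ℂ) : HasRieszFactorization fun _ => a := by
  refine (sq (g := fun _ => a ^ (1 / 2 : ℂ)) diffContOnCl_const).congr fun z _ => ?_
  simp [← Complex.cpow_nat_mul]

end HasRieszFactorization

lemma one_sub_mul_ne_zero {u z : ℂ} (hu : ‖u‖ < 1) (hz : z ∈ closedBall (0 : ℂ) 1) :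
    1 - u * z ≠ 0 := by
  refine sub_ne_zero.2 fun h => absurd (congrArg norm h) ?_
  rw [norm_one, norm_mul]
  exact (mul_lt_one_of_nonneg_of_lt_one_left (norm_nonneg u) hu (mem_closedBall_zero_iff.1 hz)).ne'

lemma diffContOnCl_one_sub_mul_cpow {u s : ℂ} (hu : ‖u‖ ≤ 1) (hs : 0 < s.re) :
    DiffContOnCl ℂ (fun z => (1 - u * z) ^ s) (ball 0 1) := by
  have re_le {z : ℂ} (hz : z ∈ closedBall (0 : ℂ) 1) : (u * z).re ≤ 1 :=
    (Complex.re_le_norm _).trans <| norm_mul u z ▸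
      mul_le_one₀ hu (norm_nonneg z) (mem_closedBall_zero_iff.1 hz)
  constructor
  · refine fun z hz => DifferentiableAt.differentiableWithinAt ?_
    refine DifferentiableAt.cpow (by fun_prop) (by fun_prop) (.inl ?_)
    have : ‖u * z‖ < 1 := by
      rw [norm_mul]
      exact mul_lt_one_of_nonneg_of_lt_one_right hu (norm_nonneg z) (mem_ball_zero_iff.1 hz)
    simpa using (Complex.re_le_norm (u * z)).trans_lt this
  · rw [closure_ball _ one_ne_zero]
    intro z hz
    refine ContinuousAt.continuousWithinAt ?_
    refine ContinuousAt.comp (g := fun w : ℂ => w ^ s) (f := fun z => 1 - u * z) ?_ (by fun_prop)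
    exact Complex.continuousAt_cpow_const_of_re_pos (.inl (by simpa using re_le hz)) hs

namespace HasRieszFactorization

lemma one_sub_mul {u : ℂ} (hu : ‖u‖ ≤ 1) : HasRieszFactorization fun z => 1 - u * z := by
  refine (sq (diffContOnCl_one_sub_mul_cpow (s := 1 / 2) hu (by norm_num))).congr fun z _ => ?_
  simp [← Complex.cpow_nat_mul]

lemma blaschkeFactor {w : ℂ} (hw : ‖w‖ < 1) :
    HasRieszFactorization fun z => (z - w) / (1 - conj w * z) := by
  have hne (z : ℂ) (hz : z ∈ closedBall (0 : ℂ) 1) : 1 - conj w * z ≠ 0 :=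
    one_sub_mul_ne_zero (by simpa using hw) hz
  refine of_norm_eq_one (DifferentiableOn.diffContOnCl ?_) fun z hz => ?_
  · rw [closure_ball _ one_ne_zero]
    exact DifferentiableOn.div (by fun_prop) (by fun_prop) hne
  · have hz1 : ‖z‖ = 1 := mem_sphere_zero_iff_norm.1 hz
    have hzz : z * conj z = 1 := by simp [Complex.mul_conj', hz1]
    have hnum : z - w = z * conj (1 - conj w * z) := by
      simp only [map_sub, map_one, map_mul, Complex.conj_conj]
      linear_combination w * hzz
    rw [norm_div, hnum, norm_mul, hz1, RCLike.norm_conj, one_mul]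
    exact div_self (norm_ne_zero_iff.2 (hne z (sphere_subset_closedBall hz)))

lemma sub_const (w : ℂ) : HasRieszFactorization fun z => z - w := by
  rcases lt_or_ge ‖w‖ 1 with hw | hw
  · have hw' : ‖conj w‖ < 1 := by simpa using hw
    exact ((blaschkeFactor hw).mul (one_sub_mul hw'.le)).congr fun z hz =>
      div_mul_cancel₀ _ (one_sub_mul_ne_zero hw' hz)
  · have hw0 : w ≠ 0 := norm_pos_iff.1 (one_pos.trans_le hw)
    refine ((const (-w)).mul (one_sub_mul (u := w⁻¹) ?_)).congr fun z _ => ?_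
    · rw [norm_inv]
      exact inv_le_one_of_one_le₀ hw
    · simp only [Pi.mul_apply]
      field_simp
      ring

lemma polynomial (p : Polynomial ℂ) : HasRieszFactorization fun z => p.eval z := by
  rw [(IsAlgClosed.splits p).eq_prod_roots]
  simp only [Polynomial.eval_mul, Polynomial.eval_C]
  refine (const p.leadingCoeff).mul ?_
  induction p.roots using Multiset.induction_on with
  | empty => simpa using const 1
  | cons w s ih => simpa [Pi.mul_def] using (sub_const w).mul ih

end HasRieszFactorization

end RieszFactorization

section Bessel

open Real (circleAverage)

variable {c : ℕ → ℂ} {f : ℂ → ℂ}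

lemma sum_sq_norm_eq_circleAverage (a : ℕ → ℂ) (n : ℕ) :
    ∑ k ∈ Finset.range n, ‖a k‖ ^ 2 =
      circleAverage (fun z => ‖∑ k ∈ Finset.range n, a k * z ^ k‖ ^ 2) 0 1 := by
  let p : Polynomial ℂ := ∑ k ∈ Finset.range n, Polynomial.monomial k (a k)
  have hcoeff (k : ℕ) : p.coeff k = if k < n then a k else 0 := by
    simp [p, Polynomial.coeff_monomial]
  have heval (z : ℂ) : p.eval z = ∑ k ∈ Finset.range n, a k * z ^ k := by
    simp [p, Polynomial.eval_finsetSum]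
  simp only [← heval, ← p.sum_sq_norm_coeff_eq_circleAverage]
  refine (Finset.sum_subset_zero_on_sdiff (fun k hk => ?_) (fun k hk => ?_) fun k hk => ?_).symm
  · by_contra hkn
    simp_all
  · simp_all
  · simp_all

lemma tendsto_circleAverage_comp_of_hasSum {r : ℝ} (hr : r ∈ Ico (0 : ℝ) 1)
    (h : ∀ z ∈ ball (0 : ℂ) 1, HasSum (fun n => c n * z ^ n) (f z)) {φ : ℂ → ℝ}
    (hφ : Continuous φ) :
    Filter.Tendsto
      (fun n => circleAverage (fun z => φ (∑ k ∈ Finset.range n, c k * r ^ k * z ^ k)) 0 1)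
      Filter.atTop (nhds (circleAverage (fun z => φ (f z)) 0 r)) := by
  have hmem {z : ℂ} (hz : ‖z‖ ≤ 1) : (r * z : ℂ) ∈ ball (0 : ℂ) 1 := by
    rw [mem_ball_zero_iff, norm_mul, Complex.norm_of_nonneg hr.1]
    exact mul_lt_one_of_nonneg_of_lt_one_left hr.1 hr.2 hz
  have hsum : Summable fun n => ‖c n * r ^ n‖ := by
    simpa using (h _ (hmem norm_one.le)).summable.norm
  rw [Real.circleAverage_eq_circleAverage_zero_one, Real.circleAverage_congr_sphere]
  · exact tendsto_circleAverage_comp_sum_range hsum hφ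
  · intro z hz
    have hz1 : ‖z‖ = 1 := by simpa using hz
    have := (h _ (hmem hz1.le)).tsum_eq
    simp only [mul_pow, ← mul_assoc] at this
    simp only [add_zero, this]

lemma sum_sq_norm_mul_pow_le_circleAverage {r : ℝ} (hr : r ∈ Ico (0 : ℝ) 1)
    (h : ∀ z ∈ ball (0 : ℂ) 1, HasSum (fun n => c n * z ^ n) (f z)) (N : ℕ) :
    ∑ k ∈ Finset.range N, ‖c k * r ^ k‖ ^ 2 ≤ circleAverage (fun z => ‖f z‖ ^ 2) 0 r := by
  refine ge_of_tendsto (tendsto_circleAverage_comp_of_hasSum hr h (φ := (‖·‖ ^ 2)) (by fun_prop)) ?_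
  filter_upwards [Filter.eventually_ge_atTop N] with n hn
  rw [← sum_sq_norm_eq_circleAverage]
  exact Finset.sum_le_sum_of_subset_of_nonneg (Finset.range_mono hn) fun _ _ _ => sq_nonneg _

lemma sum_sq_norm_tc_le_circleAverage (hf : DiffContOnCl ℂ f (ball 0 1)) (N : ℕ) :
    ∑ k ∈ Finset.range N, ‖tc f k‖ ^ 2 ≤ circleAverage (fun z => ‖f z‖ ^ 2) 0 1 := by
  have hcont : ContinuousOn (circleAverage (fun z => ‖f z‖ ^ 2) 0) (Icc 0 1) := by
    refine Real.ContinuousOn.circleAverage ((hf.continuousOn_ball.norm.pow 2).mono fun z hz => ?_)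
      fun r hr => hr.1
    simpa using hz.2
  have hlhs : ContinuousOn (fun r : ℝ => ∑ k ∈ Finset.range N, ‖tc f k * (r : ℂ) ^ k‖ ^ 2)
      (Icc 0 1) := Continuous.continuousOn (by fun_prop)
  have h1 : (1 : ℝ) ∈ closure (Ico (0 : ℝ) 1) := by simp [closure_Ico]
  have := ContinuousWithinAt.closure_le h1
    ((hlhs 1 (by simp)).mono Ico_subset_Icc_self) ((hcont 1 (by simp)).mono Ico_subset_Icc_self)
    fun r hr => sum_sq_norm_mul_pow_le_circleAverage hr
      (fun z hz => hasSum_tc hf.differentiableOn hz) N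
  simpa using this

end Bessel

section Hilbert

lemma sum_sum_mul_le_of_schur {ι κ : Type*} {s : Finset ι} {t : Finset κ} {K : ι → κ → ℝ}
    {p : ι → ℝ} {q : κ → ℝ} {A : ℝ} (hK : ∀ i ∈ s, ∀ j ∈ t, 0 ≤ K i j) (hp : ∀ i ∈ s, 0 < p i)
    (hq : ∀ j ∈ t, 0 < q j) (hrow : ∀ i ∈ s, ∑ j ∈ t, K i j * q j ≤ A * p i)
    (hcol : ∀ j ∈ t, ∑ i ∈ s, K i j * p i ≤ A * q j) (x : ι → ℝ) (y : κ → ℝ) :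
    ∑ i ∈ s, ∑ j ∈ t, K i j * (x i * y j) ≤
      A / 2 * (∑ i ∈ s, x i ^ 2 + ∑ j ∈ t, y j ^ 2) := by
  have amgm (i) (hi : i ∈ s) (j) (hj : j ∈ t) : K i j * (x i * y j) ≤
      (x i ^ 2 / p i * (K i j * q j) + y j ^ 2 / q j * (K i j * p i)) / 2 := by
    have hpi := hp i hi
    have hqj := hq j hj
    have : 0 ≤ K i j * (x i * q j - y j * p i) ^ 2 / (2 * p i * q j) :=
      div_nonneg (mul_nonneg (hK i hi j hj) (sq_nonneg _)) (by positivity)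
    refine sub_nonneg.1 (this.trans_eq ?_)
    field_simp
    ring
  have hrow' (i) (hi : i ∈ s) : x i ^ 2 / p i * ∑ j ∈ t, K i j * q j ≤ A * x i ^ 2 := by
    have hpi := hp i hi
    calc _ ≤ x i ^ 2 / p i * (A * p i) := by gcongr; exact hrow i hi
      _ = A * x i ^ 2 := by field_simp
  have hcol' (j) (hj : j ∈ t) : y j ^ 2 / q j * ∑ i ∈ s, K i j * p i ≤ A * y j ^ 2 := by
    have hqj := hq j hj
    calc _ ≤ y j ^ 2 / q j * (A * q j) := by gcongr; exact hcol j hj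
      _ = A * y j ^ 2 := by field_simp
  calc ∑ i ∈ s, ∑ j ∈ t, K i j * (x i * y j)
      ≤ ∑ i ∈ s, ∑ j ∈ t,
          (x i ^ 2 / p i * (K i j * q j) + y j ^ 2 / q j * (K i j * p i)) / 2 :=
        Finset.sum_le_sum fun i hi => Finset.sum_le_sum fun j hj => amgm i hi j hj
    _ = (∑ i ∈ s, x i ^ 2 / p i * ∑ j ∈ t, K i j * q j +
          ∑ j ∈ t, y j ^ 2 / q j * ∑ i ∈ s, K i j * p i) / 2 := by
        simp only [← Finset.sum_div, Finset.sum_add_distrib, Finset.mul_sum]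
        rw [Finset.sum_comm (s := t)]
    _ ≤ (∑ i ∈ s, A * x i ^ 2 + ∑ j ∈ t, A * y j ^ 2) / 2 := by
        gcongr (?_ + ?_) / 2
        · exact Finset.sum_le_sum hrow'
        · exact Finset.sum_le_sum hcol'
    _ = A / 2 * (∑ i ∈ s, x i ^ 2 + ∑ j ∈ t, y j ^ 2) := by
        simp only [← Finset.mul_sum]
        ring

lemma inv_mul_inv_sqrt_le_sub (i j : ℕ) :
    ((i : ℝ) + j + 1)⁻¹ * (√((j : ℝ) + 1))⁻¹ ≤
      8 / (√((i : ℝ) + 1) + √(j : ℝ)) - 8 / (√((i : ℝ) + 1) + √((j : ℝ) + 1)) := by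
  have hj : 0 ≤ (j : ℝ) := j.cast_nonneg
  have hu := Real.sq_sqrt (x := (i : ℝ) + 1) (by positivity)
  have hv := Real.sq_sqrt hj
  have hw := Real.sq_sqrt (x := (j : ℝ) + 1) (by positivity)
  have hu0 : 0 < √((i : ℝ) + 1) := by positivity
  have hw0 : 0 < √((j : ℝ) + 1) := by positivity
  have hv0 : 0 ≤ √(j : ℝ) := by positivity
  have hvw : √(j : ℝ) ≤ √((j : ℝ) + 1) := Real.sqrt_le_sqrt (by linarith)
  generalize √((i : ℝ) + 1) = u at *
  generalize √((j : ℝ) + 1) = w at *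
  generalize √(j : ℝ) = v at *
  have hinv : w⁻¹ ≤ 2 * (w - v) := by
    rw [inv_le_iff_one_le_mul₀ hw0]
    nlinarith
  calc ((i : ℝ) + j + 1)⁻¹ * w⁻¹ ≤ (4 / ((u + v) * (u + w))) * (2 * (w - v)) := by
        gcongr
        rw [inv_le_comm₀ (by positivity) (by positivity), inv_div, div_le_iff₀ four_pos]
        nlinarith [sq_nonneg (u - w)]
    _ = 8 / (u + v) - 8 / (u + w) := by
        field_simp
        ring

lemma sum_inv_mul_inv_sqrt_le (i N : ℕ) :
    ∑ j ∈ Finset.range N, ((i : ℝ) + j + 1)⁻¹ * (√((j : ℝ) + 1))⁻¹ ≤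
      8 * (√((i : ℝ) + 1))⁻¹ := by
  let F (j : ℕ) : ℝ := 8 / (√((i : ℝ) + 1) + √(j : ℝ))
  calc _ ≤ ∑ j ∈ Finset.range N, (F j - F (j + 1)) :=
        Finset.sum_le_sum fun j _ => by simpa [F] using inv_mul_inv_sqrt_le_sub i j
    _ = F 0 - F N := Finset.sum_range_sub' F N
    _ ≤ F 0 := sub_le_self _ (by positivity)
    _ = 8 * (√((i : ℝ) + 1))⁻¹ := by simp [F, div_eq_mul_inv]

lemma hilbert_inequality (N : ℕ) (x y : ℕ → ℝ) :
    ∑ i ∈ Finset.range N, ∑ j ∈ Finset.range N, x i * y j / ((i : ℝ) + j + 1) ≤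
      4 * (∑ i ∈ Finset.range N, x i ^ 2 + ∑ j ∈ Finset.range N, y j ^ 2) := by
  have schur := sum_sum_mul_le_of_schur (s := Finset.range N) (t := Finset.range N)
    (K := fun i j => ((i : ℝ) + j + 1)⁻¹) (p := fun i => (√((i : ℝ) + 1))⁻¹)
    (q := fun j => (√((j : ℝ) + 1))⁻¹) (A := 8) (fun _ _ _ _ => by positivity)
    (fun _ _ => by positivity) (fun _ _ => by positivity)
    (fun i _ => sum_inv_mul_inv_sqrt_le i N)
    (fun j _ => by simpa only [add_comm (j : ℝ)] using sum_inv_mul_inv_sqrt_le j N) x y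
  norm_num at schur
  simpa only [div_eq_inv_mul] using schur

end Hilbert

section Hardy

open Real (circleAverage)
open Finset.HasAntidiagonal (antidiagonal)

variable {b c d : ℕ → ℂ} {f g h : ℂ → ℂ}

lemma hasSum_sum_antidiagonal_mul_pow {z : ℂ} (hb : Summable fun n => ‖b n * z ^ n‖)
    (hd : Summable fun n => ‖d n * z ^ n‖) :
    HasSum (fun n => (∑ p ∈ antidiagonal n, b p.1 * d p.2) * z ^ n)
      ((∑' n, b n * z ^ n) * ∑' n, d n * z ^ n) := by
  rw [tsum_mul_tsum_eq_tsum_sum_antidiagonal_of_summable_norm hb hd]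
  refine (summable_norm_sum_mul_antidiagonal_of_summable_norm hb hd).of_norm.hasSum.congr_fun
    fun n => ?_
  rw [Finset.sum_mul]
  refine Finset.sum_congr rfl fun p hp => ?_
  rw [← Finset.HasAntidiagonal.mem_antidiagonal.1 hp, pow_add]
  ring

lemma tc_eq_sum_antidiagonal (hg : DifferentiableOn ℂ g (ball 0 1))
    (hh : DifferentiableOn ℂ h (ball 0 1)) (hf : EqOn f (g * h) (ball 0 1)) (n : ℕ) :
    tc f n = ∑ p ∈ antidiagonal n, tc g p.1 * tc h p.2 := by
  refine congrFun (tc_eq_of_hasSum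
    (c := fun n => ∑ p ∈ antidiagonal n, tc g p.1 * tc h p.2) fun z hz => ?_) n
  have hgz := hasSum_tc hg hz
  have hhz := hasSum_tc hh hz
  rw [hf hz, Pi.mul_apply, ← hgz.tsum_eq, ← hhz.tsum_eq]
  exact hasSum_sum_antidiagonal_mul_pow hgz.summable.norm hhz.summable.norm

lemma sum_range_sum_antidiagonal_le {u : ℕ → ℕ → ℝ} (hu : ∀ i j, 0 ≤ u i j) (N : ℕ) :
    ∑ n ∈ Finset.range N, ∑ p ∈ antidiagonal n, u p.1 p.2 ≤
      ∑ i ∈ Finset.range N, ∑ j ∈ Finset.range N, u i j := by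
  have hfiber (n) (hn : n ∈ Finset.range N) : antidiagonal n =
      {p ∈ Finset.range N ×ˢ Finset.range N | p.1 + p.2 = n} := by
    ext p
    simp only [Finset.HasAntidiagonal.mem_antidiagonal, Finset.mem_filter, Finset.mem_product,
      Finset.mem_range] at hn ⊢
    lia
  rw [Finset.sum_congr rfl fun n hn => by rw [hfiber n hn], ← Finset.sum_product']
  exact Finset.sum_fiberwise_le_sum_of_sum_fiber_nonneg fun _ _ =>
    Finset.sum_nonneg fun p _ => hu p.1 p.2

lemma sum_norm_tc_mul_div_le (hg : DifferentiableOn ℂ g (ball 0 1))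
    (hh : DifferentiableOn ℂ h (ball 0 1)) (hf : EqOn f (g * h) (ball 0 1)) (N : ℕ) :
    ∑ n ∈ Finset.range N, ‖tc f n‖ / (n + 1) ≤
      4 * (∑ n ∈ Finset.range N, ‖tc g n‖ ^ 2 + ∑ n ∈ Finset.range N, ‖tc h n‖ ^ 2) := by
  let u (i j : ℕ) : ℝ := ‖tc g i‖ * ‖tc h j‖ / ((i : ℝ) + j + 1)
  have hcoeff (n : ℕ) : ‖tc f n‖ / (n + 1) ≤ ∑ p ∈ antidiagonal n, u p.1 p.2 := by
    calc ‖tc f n‖ / (n + 1) ≤ (∑ p ∈ antidiagonal n, ‖tc g p.1‖ * ‖tc h p.2‖) / (n + 1) := by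
          gcongr
          simpa only [tc_eq_sum_antidiagonal hg hh hf, norm_mul] using
            norm_sum_le (antidiagonal n) fun p => tc g p.1 * tc h p.2
      _ = ∑ p ∈ antidiagonal n, u p.1 p.2 := by
          rw [Finset.sum_div]
          refine Finset.sum_congr rfl fun p hp => ?_
          rw [← Finset.HasAntidiagonal.mem_antidiagonal.1 hp, Nat.cast_add]
  calc ∑ n ∈ Finset.range N, ‖tc f n‖ / (n + 1)
      ≤ ∑ n ∈ Finset.range N, ∑ p ∈ antidiagonal n, u p.1 p.2 :=
        Finset.sum_le_sum fun n _ => hcoeff n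
    _ ≤ ∑ i ∈ Finset.range N, ∑ j ∈ Finset.range N, u i j :=
        sum_range_sum_antidiagonal_le (fun i j => by positivity) N
    _ ≤ _ := hilbert_inequality N _ _

lemma HasRieszFactorization.sum_norm_tc_div_le (hf : HasRieszFactorization f) (N : ℕ) :
    ∑ n ∈ Finset.range N, ‖tc f n‖ / (n + 1) ≤ 8 * circleAverage (fun z => ‖f z‖) 0 1 := by
  obtain ⟨g, h, hg, hh, heq, hnorm⟩ := hf
  have hg2 : circleAverage (fun z => ‖g z‖ ^ 2) 0 1 = circleAverage (fun z => ‖f z‖) 0 1 :=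
    Real.circleAverage_congr_sphere fun z hz => (hnorm z (by simpa using hz)).1
  have hh2 : circleAverage (fun z => ‖h z‖ ^ 2) 0 1 = circleAverage (fun z => ‖f z‖) 0 1 :=
    Real.circleAverage_congr_sphere fun z hz => (hnorm z (by simpa using hz)).2
  have hcoeff := sum_norm_tc_mul_div_le hg.differentiableOn hh.differentiableOn
    (heq.mono ball_subset_closedBall) N
  linarith [sum_sq_norm_tc_le_circleAverage hg N, sum_sq_norm_tc_le_circleAverage hh N]

lemma sum_range_norm_div_le_circleAverage (a : ℕ → ℂ) (N : ℕ) :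
    ∑ n ∈ Finset.range N, ‖a n‖ / (n + 1) ≤
      8 * circleAverage (fun z => ‖∑ n ∈ Finset.range N, a n * z ^ n‖) 0 1 := by
  have hfac : HasRieszFactorization fun z => ∑ n ∈ Finset.range N, a n * z ^ n := by
    simpa [Polynomial.eval_finsetSum] using HasRieszFactorization.polynomial
      (∑ n ∈ Finset.range N, Polynomial.monomial n (a n))
  have htc : tc (fun z => ∑ n ∈ Finset.range N, a n * z ^ n) =
      fun n => if n < N then a n else 0 := by
    refine tc_eq_of_hasSum fun z _ => ?_
    convert hasSum_sum_of_ne_finset_zero (s := Finset.range N) (L := .unconditional ℕ)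
      fun n hn => ?_ using 1
    · exact Finset.sum_congr rfl fun n hn => by simp [Finset.mem_range.1 hn]
    · simp [Finset.mem_range.not.1 hn]
  refine (Finset.sum_le_sum fun n hn => ?_).trans (hfac.sum_norm_tc_div_le N)
  simp [htc, Finset.mem_range.1 hn]

lemma sum_norm_mul_pow_div_le_circleAverage {r : ℝ} (hr : r ∈ Ico (0 : ℝ) 1)
    (hf : ∀ z ∈ ball (0 : ℂ) 1, HasSum (fun n => c n * z ^ n) (f z)) (N : ℕ) :
    ∑ n ∈ Finset.range N, ‖c n * r ^ n‖ / (n + 1) ≤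
      8 * circleAverage (fun z => ‖f z‖) 0 r := by
  refine ge_of_tendsto
    ((tendsto_circleAverage_comp_of_hasSum hr hf continuous_norm).const_mul 8) ?_
  filter_upwards [Filter.eventually_ge_atTop N] with n hn
  exact (Finset.sum_le_sum_of_subset_of_nonneg (Finset.range_mono hn) fun _ _ _ => by
    positivity).trans (sum_range_norm_div_le_circleAverage _ n)

lemma MemHardy.circMean_le_hardyNorm {p r : ℝ} (hf : MemHardy p f) (hr : r ∈ Ico (0 : ℝ) 1) :
    circMean p f r ≤ hardyNorm p f := by
  obtain ⟨M, hM⟩ := hf.2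
  exact le_csSup ⟨M, by rintro _ ⟨s, hs, rfl⟩; exact hM s hs⟩ ⟨r, hr, rfl⟩

lemma hardyNorm_le {p M : ℝ} (hM : ∀ r ∈ Ico (0 : ℝ) 1, circMean p f r ≤ M) :
    hardyNorm p f ≤ M :=
  csSup_le ⟨_, 0, by simp, rfl⟩ (by rintro _ ⟨r, hr, rfl⟩; exact hM r hr)

lemma MemHardy.sum_norm_tc_div_le (hf : MemHardy 1 f) (N : ℕ) :
    ∑ n ∈ Finset.range N, ‖tc f n‖ / (n + 1) ≤ 8 * hardyNorm 1 f := by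
  have hcont : Continuous fun r : ℝ => ∑ n ∈ Finset.range N, ‖tc f n * (r : ℂ) ^ n‖ / (n + 1) := by
    fun_prop
  have hbound (r) (hr : r ∈ Ico (0 : ℝ) 1) :
      ∑ n ∈ Finset.range N, ‖tc f n * (r : ℂ) ^ n‖ / (n + 1) ≤ 8 * hardyNorm 1 f := by
    have h := hf.circMean_le_hardyNorm hr
    rw [circMean_one_eq_circleAverage] at h
    exact (sum_norm_mul_pow_div_le_circleAverage hr (fun z hz => hasSum_tc hf.1 hz) N).trans
      (by gcongr)
  have h1 : (1 : ℝ) ∈ closure (Ico (0 : ℝ) 1) := by simp [closure_Ico]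
  simpa using hcont.continuousWithinAt.closure_le h1 continuousWithinAt_const hbound

end Hardy

section Kernel

open Real (circleAverage)

lemma circleAverage_inv_norm_one_sub_mul_sq_of_norm_lt_one {u : ℂ} (hu : ‖u‖ < 1) :
    circleAverage (fun z => (‖1 - u * z‖ ^ 2)⁻¹) 0 1 = (1 - ‖u‖ ^ 2)⁻¹ := by
  have hreflect (z : ℂ) (hz : ‖z‖ = 1) : ‖1 - u * z‖ = ‖z - starRingEnd ℂ u‖ := by
    have hzz : z * starRingEnd ℂ z = 1 := by simp [Complex.mul_conj, Complex.normSq_eq_norm_sq, hz]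
    calc ‖1 - u * z‖ = ‖z * starRingEnd ℂ (z - starRingEnd ℂ u)‖ := by
          rw [map_sub, Complex.conj_conj, mul_sub, hzz, mul_comm u]
      _ = ‖z - starRingEnd ℂ u‖ := by rw [norm_mul, RCLike.norm_conj, hz, one_mul]
  have hpoisson : circleAverage (fun z => (1 - ‖u‖ ^ 2) • (‖1 - u * z‖ ^ 2)⁻¹) 0 1 = 1 := by
    have hw : starRingEnd ℂ u ∈ ball (0 : ℂ) 1 := by simpa
    have hharm : InnerProductSpace.HarmonicOnNhd (fun _ : ℂ => (1 : ℝ)) (closedBall 0 1) :=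
      InnerProductSpace.harmonicOnNhd_const 1
    refine (Real.circleAverage_congr_sphere fun z hz => ?_).trans
      (hharm.circleAverage_poissonKernel_smul hw)
    have hz1 : ‖z‖ = 1 := by simpa using hz
    simp [poissonKernel, hreflect z hz1, hz1, div_eq_mul_inv]
  rw [Real.circleAverage_fun_smul, smul_eq_mul] at hpoisson
  exact eq_inv_of_mul_eq_one_right hpoisson

lemma circleAverage_inv_norm_one_sub_mul_sq {u : ℂ} {r : ℝ} (h : ‖u * r‖ < 1) :
    circleAverage (fun z => (‖1 - u * z‖ ^ 2)⁻¹) 0 r = (1 - ‖u * r‖ ^ 2)⁻¹ := by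
  rw [Real.circleAverage_eq_circleAverage_zero_one,
    ← circleAverage_inv_norm_one_sub_mul_sq_of_norm_lt_one h]
  simp only [add_zero, mul_assoc]

lemma inv_norm_one_sub_mul_le {s : ℝ} (hs : s ∈ Ico (0 : ℝ) 1) {z : ℂ} (hz : ‖z‖ ≤ 1) :
    ‖1 - s * z‖⁻¹ ≤ 1 + ∫ u in (0 : ℝ)..s, (‖1 - u * z‖ ^ 2)⁻¹ := by
  have hne (u : ℝ) (hu : u ∈ uIcc 0 s) : 1 - u * z ≠ 0 := by
    rw [uIcc_of_le hs.1] at hu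
    refine one_sub_mul_ne_zero ?_ (by simpa using hz)
    simpa [abs_of_nonneg hu.1] using hu.2.trans_lt hs.2
  have hderiv (u : ℝ) (hu : u ∈ uIcc 0 s) :
      HasDerivAt (fun u : ℝ => (1 - u * z)⁻¹) (z / (1 - u * z) ^ 2) u := by
    simpa using (((hasDerivAt_id u).ofReal_comp.mul_const z).const_sub 1).fun_inv (hne u hu)
  have hcont : ContinuousOn (fun u : ℝ => z / (1 - u * z) ^ 2) (uIcc 0 s) :=
    fun u hu => ContinuousAt.continuousWithinAt (by
      have := pow_ne_zero 2 (hne u hu); fun_prop (disch := assumption))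
  have hcont' : ContinuousOn (fun u : ℝ => (‖1 - u * z‖ ^ 2)⁻¹) (uIcc 0 s) :=
    fun u hu => ContinuousAt.continuousWithinAt (by
      have := pow_ne_zero 2 (norm_ne_zero_iff.2 (hne u hu)); fun_prop (disch := assumption))
  have hftc := intervalIntegral.integral_eq_sub_of_hasDerivAt hderiv hcont.intervalIntegrable
  calc ‖1 - s * z‖⁻¹ = ‖1 + ∫ u in (0 : ℝ)..s, z / (1 - u * z) ^ 2‖ := by simp [hftc]
    _ ≤ 1 + ‖∫ u in (0 : ℝ)..s, z / (1 - u * z) ^ 2‖ := by simpa using norm_add_le (1 : ℂ) _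
    _ ≤ 1 + ∫ u in (0 : ℝ)..s, (‖1 - u * z‖ ^ 2)⁻¹ := by
        gcongr
        refine intervalIntegral.norm_integral_le_of_norm_le hs.1 (.of_forall fun u _ => ?_)
          hcont'.intervalIntegrable
        rw [norm_div, norm_pow, div_eq_mul_inv]
        exact mul_le_of_le_one_left (by positivity) hz

lemma log_two_le_log_two_div_one_sub {t : ℝ} (ht : t ∈ Ico (0 : ℝ) 1) :
    Real.log 2 ≤ Real.log (2 / (1 - t)) := by
  refine Real.log_le_log two_pos ?_
  rw [le_div_iff₀ (sub_pos.2 ht.2)]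
  linarith [ht.1]

lemma integral_inv_one_sub {s : ℝ} (hs : s < 1) :
    ∫ u in (0 : ℝ)..s, (1 - u)⁻¹ = -Real.log (1 - s) := by
  rw [intervalIntegral.integral_comp_sub_left (fun x => x⁻¹), sub_zero,
    integral_inv_of_pos (sub_pos.2 hs) one_pos, one_div, Real.log_inv]

lemma norm_ofReal_mul_ofReal_lt_one {u r : ℝ} (hu : u ∈ Ico (0 : ℝ) 1) (hr : r ∈ Icc (0 : ℝ) 1) :
    ‖(u * r : ℂ)‖ < 1 := by
  rw [norm_mul, Complex.norm_of_nonneg hu.1, Complex.norm_of_nonneg hr.1]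
  exact mul_lt_one_of_nonneg_of_lt_one_left hu.1 hu.2 hr.2

lemma one_sub_mul_circleMap_ne_zero {u r : ℝ} (hu : u ∈ Ico (0 : ℝ) 1) (hr : r ∈ Icc (0 : ℝ) 1)
    (θ : ℝ) : 1 - u * circleMap 0 r θ ≠ 0 := by
  simpa [circleMap, mul_assoc] using
    one_sub_mul_ne_zero (norm_ofReal_mul_ofReal_lt_one hu hr) (z := circleMap 0 1 θ) (by simp)

variable {s r : ℝ}

lemma integrableOn_inv_norm_one_sub_mul_circleMap_sq (hs : s ∈ Ico (0 : ℝ) 1)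
    (hr : r ∈ Icc (0 : ℝ) 1) :
    IntegrableOn (Function.uncurry fun θ u : ℝ => (‖1 - u * circleMap 0 r θ‖ ^ 2)⁻¹)
      (uIoc 0 (2 * Real.pi) ×ˢ uIoc 0 s) := by
  have hcont : ContinuousOn (Function.uncurry fun θ u : ℝ => (‖1 - u * circleMap 0 r θ‖ ^ 2)⁻¹)
      (Icc 0 (2 * Real.pi) ×ˢ Icc 0 s) :=
    ContinuousOn.inv₀ (by fun_prop) fun p hp => pow_ne_zero 2 (norm_ne_zero_iff.2
      (one_sub_mul_circleMap_ne_zero ⟨hp.2.1, hp.2.2.trans_lt hs.2⟩ hr p.1))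
  rw [uIoc_of_le Real.two_pi_pos.le, uIoc_of_le hs.1]
  exact (hcont.integrableOn_compact (isCompact_Icc.prod isCompact_Icc)).mono_set
    (prod_mono Ioc_subset_Icc_self Ioc_subset_Icc_self)

lemma circleIntegrable_integral_inv_norm_one_sub_mul_sq (hs : s ∈ Ico (0 : ℝ) 1)
    (hr : r ∈ Icc (0 : ℝ) 1) :
    CircleIntegrable (fun z => ∫ u in (0 : ℝ)..s, (‖1 - u * z‖ ^ 2)⁻¹) 0 r := by
  have hint := integrableOn_inv_norm_one_sub_mul_circleMap_sq hs hr
  rw [IntegrableOn, Measure.volume_eq_prod, ← Measure.prod_restrict] at hint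
  simpa only [CircleIntegrable, intervalIntegrable_iff, intervalIntegral.integral_of_le hs.1,
    uIoc_of_le hs.1, IntegrableOn, Function.uncurry] using hint.integral_prod_left

lemma circleAverage_integral_inv_norm_one_sub_mul_sq (hs : s ∈ Ico (0 : ℝ) 1)
    (hr : r ∈ Icc (0 : ℝ) 1) :
    circleAverage (fun z => ∫ u in (0 : ℝ)..s, (‖1 - u * z‖ ^ 2)⁻¹) 0 r =
      ∫ u in (0 : ℝ)..s, (1 - (u * r) ^ 2)⁻¹ := by
  rw [Real.circleAverage, intervalIntegral_intervalIntegral_swap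
    (integrableOn_inv_norm_one_sub_mul_circleMap_sq hs hr), ← intervalIntegral.integral_smul]
  refine intervalIntegral.integral_congr fun u hu => ?_
  rw [uIcc_of_le hs.1] at hu
  have havg := circleAverage_inv_norm_one_sub_mul_sq
    (norm_ofReal_mul_ofReal_lt_one ⟨hu.1, hu.2.trans_lt hs.2⟩ hr)
  rwa [norm_mul, Complex.norm_of_nonneg hu.1, Complex.norm_of_nonneg hr.1] at havg

lemma integral_inv_one_sub_mul_sq_le (hs : s ∈ Ico (0 : ℝ) 1) (hr : r ∈ Icc (0 : ℝ) 1) :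
    ∫ u in (0 : ℝ)..s, (1 - (u * r) ^ 2)⁻¹ ≤ -Real.log (1 - s) := by
  have hle {u : ℝ} (hu : u ∈ Icc 0 s) : (u * r) ^ 2 ≤ u := by
    have hur : u * r ≤ u := mul_le_of_le_one_right hu.1 hr.2
    nlinarith [hu.1, hu.2, hs.2, mul_nonneg hu.1 hr.1]
  have hcont {v : ℝ → ℝ} (hv : Continuous v) (hvu : ∀ u ∈ Icc 0 s, v u ≤ u) :
      IntervalIntegrable (fun u => (1 - v u)⁻¹) volume 0 s := by
    refine ContinuousOn.intervalIntegrable (ContinuousOn.inv₀ (by fun_prop) fun u hu => ?_)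
    rw [uIcc_of_le hs.1] at hu
    linarith [hvu u hu, hu.2, hs.2]
  calc ∫ u in (0 : ℝ)..s, (1 - (u * r) ^ 2)⁻¹ ≤ ∫ u in (0 : ℝ)..s, (1 - u)⁻¹ := by
        refine intervalIntegral.integral_mono_on hs.1 (hcont (by fun_prop) fun u => hle)
          (hcont continuous_id fun u _ => le_rfl) fun u hu => ?_
        exact inv_anti₀ (by linarith [hu.2, hs.2]) (by linarith [hle hu])
    _ = -Real.log (1 - s) := integral_inv_one_sub hs.2

lemma circleIntegrable_inv_norm_one_sub_mul (hs : s ∈ Ico (0 : ℝ) 1) (hr : r ∈ Icc (0 : ℝ) 1) :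
    CircleIntegrable (fun z => ‖1 - s * z‖⁻¹) 0 r :=
  (Continuous.inv₀ (by fun_prop) fun θ =>
    norm_ne_zero_iff.2 (one_sub_mul_circleMap_ne_zero hs hr θ)).intervalIntegrable 0 (2 * Real.pi)

lemma circleAverage_inv_norm_one_sub_mul_le (hs : s ∈ Ico (0 : ℝ) 1) (hr : r ∈ Icc (0 : ℝ) 1) :
    circleAverage (fun z => ‖1 - s * z‖⁻¹) 0 r ≤ 2 * Real.log (2 / (1 - s)) := by
  have hint := circleIntegrable_integral_inv_norm_one_sub_mul_sq hs hr
  calc circleAverage (fun z => ‖1 - s * z‖⁻¹) 0 r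
      ≤ circleAverage (fun z => 1 + ∫ u in (0 : ℝ)..s, (‖1 - u * z‖ ^ 2)⁻¹) 0 r := by
        refine Real.circleAverage_mono (circleIntegrable_inv_norm_one_sub_mul hs hr)
          ((circleIntegrable_const 1 0 r).fun_add hint) fun z hz =>
          inv_norm_one_sub_mul_le hs ?_
        simpa [mem_sphere_zero_iff_norm.1 hz, abs_of_nonneg hr.1] using hr.2
    _ = 1 + ∫ u in (0 : ℝ)..s, (1 - (u * r) ^ 2)⁻¹ := by
        rw [Real.circleAverage_fun_add (circleIntegrable_const 1 0 r) hint,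
          Real.circleAverage_const, circleAverage_integral_inv_norm_one_sub_mul_sq hs hr]
    _ ≤ 1 - Real.log (1 - s) := by linarith [integral_inv_one_sub_mul_sq_le hs hr]
    _ ≤ 2 * Real.log (2 / (1 - s)) := by
        have h := log_two_le_log_two_div_one_sub hs
        rw [Real.log_div two_ne_zero (sub_pos.2 hs.2).ne'] at h ⊢
        linarith [Real.log_two_gt_d9]

end Kernel

section LogMoment

lemma ofReal_eq_add_setLIntegral_deriv {F F' : ℝ → ℝ} {a b : ℝ} (hab : a ≤ b)
    (hF : ∀ t ∈ Icc a b, HasDerivAt F (F' t) t) (hcont : ContinuousOn F' (Icc a b))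
    (hF' : ∀ t ∈ Icc a b, 0 ≤ F' t) (ha : 0 ≤ F a) :
    ENNReal.ofReal (F b) = ENNReal.ofReal (F a) + ∫⁻ s in Icc a b, ENNReal.ofReal (F' s) := by
  have hint : IntervalIntegrable F' volume a b :=
    (hcont.mono (uIcc_of_le hab).subset).intervalIntegrable
  have hftc : ∫ s in Icc a b, F' s = F b - F a := by
    rw [integral_Icc_eq_integral_Ioc, ← intervalIntegral.integral_of_le hab]
    exact intervalIntegral.integral_eq_sub_of_hasDerivAt
      (fun t ht => hF t (uIcc_of_le hab ▸ ht)) hint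
  rw [← ofReal_integral_eq_lintegral_ofReal (hcont.integrableOn_compact isCompact_Icc)
    (ae_restrict_of_forall_mem measurableSet_Icc hF'), ← ENNReal.ofReal_add ha
    (setIntegral_nonneg measurableSet_Icc hF'), hftc, add_sub_cancel]

lemma setLIntegral_ofReal_eq_add_setLIntegral_deriv_mul_meas_Ico {μ : Measure ℝ} [SFinite μ]
    {F F' : ℝ → ℝ} {a b : ℝ} (hF : ∀ t ∈ Ico a b, HasDerivAt F (F' t) t)
    (hcont : ContinuousOn F' (Ico a b)) (hF' : ∀ t ∈ Ico a b, 0 ≤ F' t) (ha : 0 ≤ F a) :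
    ∫⁻ t in Ico a b, ENNReal.ofReal (F t) ∂μ = ENNReal.ofReal (F a) * μ (Ico a b) +
      ∫⁻ s in Ico a b, ENNReal.ofReal (F' s) * μ (Ico s b) := by
  have hFt (t) (ht : t ∈ Ico a b) : ENNReal.ofReal (F t) = ENNReal.ofReal (F a) +
      ∫⁻ s in Ico a b, {p : ℝ × ℝ | p.2 ≤ p.1}.indicator (fun p => ENNReal.ofReal (F' p.2))
        (t, s) := by
    have hsub : Icc a t ⊆ Ico a b := Icc_subset_Ico_right ht.2
    have hIcc : Iic t ∩ Ico a b = Icc a t := by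
      ext s
      simp only [mem_inter_iff, mem_Iic, mem_Ico, mem_Icc]
      grind
    rw [ofReal_eq_add_setLIntegral_deriv ht.1 (fun s hs => hF s (hsub hs)) (hcont.mono hsub)
      (fun s hs => hF' s (hsub hs)) ha, ← hIcc, ← Measure.restrict_restrict measurableSet_Iic,
      ← lintegral_indicator measurableSet_Iic]
    rfl
  have hmeas : AEMeasurable (Function.uncurry fun t s : ℝ =>
      {p : ℝ × ℝ | p.2 ≤ p.1}.indicator (fun p => ENNReal.ofReal (F' p.2)) (t, s))
      ((μ.restrict (Ico a b)).prod (volume.restrict (Ico a b))) :=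
    ((hcont.aemeasurable measurableSet_Ico).comp_snd.ennreal_ofReal).indicator
      (measurableSet_le measurable_snd measurable_fst)
  rw [setLIntegral_congr_fun measurableSet_Ico hFt, lintegral_add_left measurable_const,
    setLIntegral_const, lintegral_lintegral_swap hmeas]
  congr 1
  refine setLIntegral_congr_fun measurableSet_Ico fun s hs => ?_
  have hIco : Ici s ∩ Ico a b = Ico s b := by
    rw [inter_comm, Ico_inter_Ici, max_eq_right hs.1]
  rw [← hIco, ← Measure.restrict_apply measurableSet_Ici, ← lintegral_indicator_const
    measurableSet_Ici]
  rfl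

lemma hasDerivAt_log_two_div_one_sub {t : ℝ} (ht : t < 1) :
    HasDerivAt (fun t => Real.log (2 / (1 - t))) (1 - t)⁻¹ t := by
  have hne : 1 - t ≠ 0 := (sub_pos.2 ht).ne'
  convert ((hasDerivAt_const t 2).fun_div ((hasDerivAt_id' t).const_sub 1) hne).log
    (div_ne_zero two_ne_zero hne) using 1
  field_simp
  ring

lemma hasDerivAt_pow_mul_log_two_div_one_sub (k : ℕ) {t : ℝ} (ht : t < 1) :
    HasDerivAt (fun t => t ^ k * Real.log (2 / (1 - t)))
      (k * t ^ (k - 1) * Real.log (2 / (1 - t)) + t ^ k * (1 - t)⁻¹) t :=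
  (hasDerivAt_pow k t).fun_mul (hasDerivAt_log_two_div_one_sub ht)

lemma integral_deriv_pow_mul_one_sub_add (k : ℕ) :
    ∫ s in (0 : ℝ)..1, (k * s ^ (k - 1) * (1 - s) + 2 * s ^ k) = 3 / (k + 1) - 0 ^ k := by
  have hderiv (s : ℝ) : HasDerivAt (fun s : ℝ => s ^ k * (1 - s) + 3 / (k + 1) * s ^ (k + 1))
      (k * s ^ (k - 1) * (1 - s) + 2 * s ^ k) s := by
    refine (((hasDerivAt_pow k s).fun_mul ((hasDerivAt_id' s).const_sub 1)).fun_add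
      ((hasDerivAt_pow (k + 1) s).const_mul (3 / (k + 1 : ℝ)))).congr_deriv ?_
    push_cast [Nat.add_sub_cancel]
    field_simp
    ring
  rw [intervalIntegral.integral_eq_sub_of_hasDerivAt (fun s _ => hderiv s)
    (Continuous.intervalIntegrable (by fun_prop) 0 1)]
  simp

variable {μ : Measure ℝ} [IsFiniteMeasure μ] {C : ℝ}

lemma ofReal_deriv_mul_meas_Ico_le (k : ℕ) {s : ℝ} (hs : s ∈ Ico (0 : ℝ) 1)
    (h : μ.real (Ico s 1) * Real.log (2 / (1 - s)) ≤ C * (1 - s)) :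
    ENNReal.ofReal (k * s ^ (k - 1) * Real.log (2 / (1 - s)) + s ^ k * (1 - s)⁻¹) * μ (Ico s 1) ≤
      ENNReal.ofReal (C * (k * s ^ (k - 1) * (1 - s) + 2 * s ^ k)) := by
  have hlog := log_two_le_log_two_div_one_sub hs
  have hs0 := hs.1
  have hs1 : 0 < 1 - s := sub_pos.2 hs.2
  have hdiv : μ.real (Ico s 1) * (1 - s)⁻¹ ≤ 2 * C := by
    rw [← div_eq_mul_inv, div_le_iff₀ hs1]
    nlinarith [Real.log_two_gt_d9, measureReal_nonneg (μ := μ) (s := Ico s 1)]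
  rw [← ofReal_measureReal, ← ENNReal.ofReal_mul' measureReal_nonneg]
  refine ENNReal.ofReal_le_ofReal ?_
  calc (k * s ^ (k - 1) * Real.log (2 / (1 - s)) + s ^ k * (1 - s)⁻¹) * μ.real (Ico s 1)
      = k * s ^ (k - 1) * (μ.real (Ico s 1) * Real.log (2 / (1 - s))) +
          s ^ k * (μ.real (Ico s 1) * (1 - s)⁻¹) := by ring
    _ ≤ k * s ^ (k - 1) * (C * (1 - s)) + s ^ k * (2 * C) := by gcongr
    _ = C * (k * s ^ (k - 1) * (1 - s) + 2 * s ^ k) := by ring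

lemma setLIntegral_ofReal_deriv_pow_mul_one_sub_add (hC : 0 ≤ C) (k : ℕ) :
    ∫⁻ s in Ico (0 : ℝ) 1, ENNReal.ofReal (C * (k * s ^ (k - 1) * (1 - s) + 2 * s ^ k)) =
      ENNReal.ofReal (C * (3 / (k + 1) - 0 ^ k)) := by
  have hcont : Continuous fun s : ℝ => C * (k * s ^ (k - 1) * (1 - s) + 2 * s ^ k) := by fun_prop
  rw [← integral_deriv_pow_mul_one_sub_add, ← intervalIntegral.integral_const_mul,
    intervalIntegral.integral_of_le zero_le_one, ← restrict_Ico_eq_restrict_Ioc,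
    ofReal_integral_eq_lintegral_ofReal
      (hcont.integrableOn_Icc.mono_set Ico_subset_Icc_self) ?_]
  refine ae_restrict_of_forall_mem measurableSet_Ico fun s hs => ?_
  have hs0 := hs.1
  have hs1 : 0 ≤ 1 - s := sub_nonneg.2 hs.2.le
  positivity

lemma continuousOn_deriv_pow_mul_log_two_div_one_sub (k : ℕ) :
    ContinuousOn (fun s : ℝ => k * s ^ (k - 1) * Real.log (2 / (1 - s)) + s ^ k * (1 - s)⁻¹)
      (Ico 0 1) := fun s hs => by
  have hs1 : 1 - s ≠ 0 := (sub_pos.2 hs.2).ne'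
  exact ContinuousAt.continuousWithinAt (by fun_prop (disch := positivity))

variable (hC : 0 ≤ C)
  (h : ∀ s ∈ Ico (0 : ℝ) 1, μ.real (Ico s 1) * Real.log (2 / (1 - s)) ≤ C * (1 - s))
include hC h

lemma setLIntegral_pow_mul_log_le (k : ℕ) :
    ∫⁻ t in Ico (0 : ℝ) 1, ENNReal.ofReal (t ^ k * Real.log (2 / (1 - t))) ∂μ ≤
      ENNReal.ofReal (3 * C / (k + 1)) := by
  have hlog (s : ℝ) (hs : s ∈ Ico (0 : ℝ) 1) : 0 ≤ Real.log (2 / (1 - s)) :=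
    (Real.log_nonneg one_le_two).trans (log_two_le_log_two_div_one_sub hs)
  have hzero : ENNReal.ofReal (0 ^ k * Real.log (2 / (1 - 0))) * μ (Ico 0 1) ≤
      ENNReal.ofReal (C * 0 ^ k) := by
    rw [← ofReal_measureReal, ← ENNReal.ofReal_mul' measureReal_nonneg]
    refine ENNReal.ofReal_le_ofReal ?_
    have h0 := mul_le_mul_of_nonneg_left (h 0 (by simp)) (show (0 : ℝ) ≤ 0 ^ k by positivity)
    linarith
  have hk : (0 : ℝ) ^ k ≤ 3 / (k + 1) := by
    rcases k with _ | k
    · norm_num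
    · rw [zero_pow k.succ_ne_zero]
      positivity
  rw [setLIntegral_ofReal_eq_add_setLIntegral_deriv_mul_meas_Ico
    (fun t ht => hasDerivAt_pow_mul_log_two_div_one_sub k ht.2)
    (continuousOn_deriv_pow_mul_log_two_div_one_sub k)
    (fun s hs => ?_) (by have := hlog 0 (by simp); positivity)]
  · calc _ ≤ ENNReal.ofReal (C * 0 ^ k) + ENNReal.ofReal (C * (3 / (k + 1) - 0 ^ k)) := by
          rw [← setLIntegral_ofReal_deriv_pow_mul_one_sub_add hC]
          exact add_le_add hzero (setLIntegral_mono' measurableSet_Ico fun s hs =>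
            ofReal_deriv_mul_meas_Ico_le k hs (h s hs))
      _ = ENNReal.ofReal (3 * C / (k + 1)) := by
          rw [← ENNReal.ofReal_add (by positivity) (mul_nonneg hC (sub_nonneg.2 hk))]
          ring_nf
  · have hs0 := hs.1
    have hs1 : 0 < 1 - s := sub_pos.2 hs.2
    have := hlog s hs
    positivity

lemma setLIntegral_ofReal_pow_mul_ofReal_log_le (k : ℕ) :
    ∫⁻ t in Ico (0 : ℝ) 1, ENNReal.ofReal (t ^ k) * ENNReal.ofReal (Real.log (2 / (1 - t))) ∂μ ≤
      ENNReal.ofReal (3 * C / (k + 1)) := by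
  refine le_trans (setLIntegral_mono' measurableSet_Ico fun t ht => ?_)
    (setLIntegral_pow_mul_log_le hC h k)
  rw [ENNReal.ofReal_mul (pow_nonneg ht.1 k)]

end LogMoment

section Moments

variable {μ : Measure ℝ} {f : ℂ → ℂ} {C : ℝ}

lemma ofReal_mem_ball {t : ℝ} (ht : t ∈ Ico (0 : ℝ) 1) : (t : ℂ) ∈ ball (0 : ℂ) 1 := by
  simpa [abs_of_nonneg ht.1] using ht.2

lemma mom_nonneg (n : ℕ) : 0 ≤ mom μ n :=
  setIntegral_nonneg measurableSet_Ico fun _ ht => pow_nonneg ht.1 n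

lemma setLIntegral_le_two_mul_setLIntegral_mul_log (g : ℝ → ℝ≥0∞) :
    ∫⁻ t in Ico (0 : ℝ) 1, g t ∂μ ≤
      2 * ∫⁻ t in Ico (0 : ℝ) 1, g t * ENNReal.ofReal (Real.log (2 / (1 - t))) ∂μ := by
  rw [← lintegral_const_mul' _ _ ENNReal.ofNat_ne_top]
  refine setLIntegral_mono' measurableSet_Ico fun t ht => ?_
  calc g t = g t * ENNReal.ofReal 1 := by simp
    _ ≤ g t * ENNReal.ofReal (2 * Real.log (2 / (1 - t))) := by
        gcongr
        linarith [log_two_le_log_two_div_one_sub ht, Real.log_two_gt_d9]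
    _ = 2 * (g t * ENNReal.ofReal (Real.log (2 / (1 - t)))) := by
        rw [ENNReal.ofReal_mul two_pos.le, ENNReal.ofReal_ofNat, mul_left_comm]

lemma setLIntegral_enorm_mul_le_tsum (hf : DifferentiableOn ℂ f (ball 0 1)) {w : ℝ → ℝ≥0∞}
    (hw : Measurable w) :
    ∫⁻ t in Ico (0 : ℝ) 1, ‖f t‖ₑ * w t ∂μ ≤
      ∑' k : ℕ, ‖tc f k‖ₑ * ∫⁻ t in Ico (0 : ℝ) 1, ENNReal.ofReal (t ^ k) * w t ∂μ := by
  calc ∫⁻ t in Ico (0 : ℝ) 1, ‖f t‖ₑ * w t ∂μ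
      ≤ ∫⁻ t in Ico (0 : ℝ) 1, ∑' k : ℕ, ‖tc f k‖ₑ * (ENNReal.ofReal (t ^ k) * w t) ∂μ := by
        refine setLIntegral_mono' measurableSet_Ico fun t ht => ?_
        simp_rw [← mul_assoc, ENNReal.tsum_mul_right]
        gcongr
        calc ‖f t‖ₑ ≤ ∑' k : ℕ, ‖tc f k * (t : ℂ) ^ k‖ₑ :=
              (hasSum_tc hf (ofReal_mem_ball ht)).tsum_eq ▸ enorm_tsum_le_tsum_enorm
          _ = ∑' k : ℕ, ‖tc f k‖ₑ * ENNReal.ofReal (t ^ k) := by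
              refine tsum_congr fun k => ?_
              rw [enorm_mul, ← Complex.ofReal_pow, ← ofReal_norm ((t ^ k : ℝ) : ℂ),
                Complex.norm_of_nonneg (pow_nonneg ht.1 k)]
    _ = _ := by
        rw [lintegral_tsum fun k => by fun_prop]
        exact tsum_congr fun k => lintegral_const_mul _ (by fun_prop)

lemma MemHardy.tsum_enorm_tc_mul_le (hf : MemHardy 1 f) (hC : 0 ≤ C) :
    ∑' k : ℕ, ‖tc f k‖ₑ * ENNReal.ofReal (C / (k + 1)) ≤
      ENNReal.ofReal (C * (8 * hardyNorm 1 f)) := by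
  refine ENNReal.tsum_le_of_sum_range_le fun N => ?_
  calc ∑ k ∈ Finset.range N, ‖tc f k‖ₑ * ENNReal.ofReal (C / (k + 1))
      = ENNReal.ofReal (C * ∑ k ∈ Finset.range N, ‖tc f k‖ / (k + 1)) := by
        rw [Finset.mul_sum, ENNReal.ofReal_sum_of_nonneg fun k _ => by positivity]
        refine Finset.sum_congr rfl fun k _ => ?_
        rw [← ofReal_norm, ← ENNReal.ofReal_mul (norm_nonneg _)]
        ring_nf
    _ ≤ ENNReal.ofReal (C * (8 * hardyNorm 1 f)) := by
        gcongr
        exact hf.sum_norm_tc_div_le N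

variable [IsFiniteMeasure μ]

lemma integrableOn_pow_Ico (n : ℕ) : IntegrableOn (fun t : ℝ => t ^ n) (Ico 0 1) μ :=
  (continuous_pow n).integrableOn_Icc.mono_set Ico_subset_Icc_self

lemma mom_add_le (n k : ℕ) : mom μ (n + k) ≤ mom μ k :=
  setIntegral_mono_on (integrableOn_pow_Ico _) (integrableOn_pow_Ico _) measurableSet_Ico
    fun _ ht => pow_le_pow_of_le_one ht.1 ht.2.le (Nat.le_add_left k n)

lemma ofReal_mom (n : ℕ) :
    ENNReal.ofReal (mom μ n) = ∫⁻ t in Ico (0 : ℝ) 1, ENNReal.ofReal (t ^ n) ∂μ :=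
  ofReal_integral_eq_lintegral_ofReal (integrableOn_pow_Ico n)
    (ae_restrict_of_forall_mem measurableSet_Ico fun _ ht => pow_nonneg ht.1 n)

variable (hC : 0 ≤ C)
  (h : ∀ s ∈ Ico (0 : ℝ) 1, μ.real (Ico s 1) * Real.log (2 / (1 - s)) ≤ C * (1 - s))
include hC h

lemma mom_le (k : ℕ) : mom μ k ≤ 6 * C / (k + 1) := by
  refine (ENNReal.ofReal_le_ofReal_iff (by positivity)).1 ?_
  calc ENNReal.ofReal (mom μ k) ≤ 2 * ENNReal.ofReal (3 * C / (k + 1)) := by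
        rw [ofReal_mom]
        refine (setLIntegral_le_two_mul_setLIntegral_mul_log _).trans ?_
        gcongr
        exact setLIntegral_ofReal_pow_mul_ofReal_log_le hC h k
    _ = ENNReal.ofReal (6 * C / (k + 1)) := by
        rw [← ENNReal.ofReal_ofNat 2, ← ENNReal.ofReal_mul two_pos.le]
        ring_nf

lemma MemHardy.summable_norm_mom_mul_tc (hf : MemHardy 1 f) (n : ℕ) :
    Summable fun k => ‖(mom μ (n + k) : ℂ) * tc f k‖ := by
  refine summable_of_sum_range_le (c := 6 * C * (8 * hardyNorm 1 f)) (fun k => norm_nonneg _)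
    fun N => ?_
  calc ∑ k ∈ Finset.range N, ‖(mom μ (n + k) : ℂ) * tc f k‖
      ≤ ∑ k ∈ Finset.range N, 6 * C * (‖tc f k‖ / (k + 1)) := by
        refine Finset.sum_le_sum fun k _ => ?_
        rw [norm_mul, Complex.norm_of_nonneg (mom_nonneg _), mul_div_assoc', ← div_mul_eq_mul_div]
        gcongr
        exact (mom_add_le n k).trans (mom_le hC h k)
    _ ≤ 6 * C * (8 * hardyNorm 1 f) := by
        rw [← Finset.mul_sum]
        gcongr
        exact hf.sum_norm_tc_div_le N

lemma MemHardy.setLIntegral_enorm_mul_log_le (hf : MemHardy 1 f) :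
    ∫⁻ t in Ico (0 : ℝ) 1, ‖f t‖ₑ * ENNReal.ofReal (Real.log (2 / (1 - t))) ∂μ ≤
      ENNReal.ofReal (24 * C * hardyNorm 1 f) := by
  calc ∫⁻ t in Ico (0 : ℝ) 1, ‖f t‖ₑ * ENNReal.ofReal (Real.log (2 / (1 - t))) ∂μ
      ≤ ∑' k : ℕ, ‖tc f k‖ₑ * ENNReal.ofReal (3 * C / (k + 1)) :=
        (setLIntegral_enorm_mul_le_tsum hf.1 (by fun_prop)).trans (ENNReal.tsum_le_tsum fun k =>
          mul_le_mul_right (setLIntegral_ofReal_pow_mul_ofReal_log_le hC h k) _)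
    _ ≤ ENNReal.ofReal (24 * C * hardyNorm 1 f) :=
        (hf.tsum_enorm_tc_mul_le (by positivity)).trans_eq (by ring_nf)

end Moments

section IntegralOperator

open Real (circleAverage)

variable {μ : Measure ℝ} {f : ℂ → ℂ}

lemma continuousOn_comp_ofReal (hf : DifferentiableOn ℂ f (ball 0 1)) :
    ContinuousOn (fun t : ℝ => f t) (Ico 0 1) :=
  hf.continuousOn.comp Complex.continuous_ofReal.continuousOn fun _ => ofReal_mem_ball

lemma hasSum_mom_mul_tc [IsFiniteMeasure μ] (hf : DifferentiableOn ℂ f (ball 0 1)) {n : ℕ}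
    (hsum : Summable fun k => ‖(mom μ (n + k) : ℂ) * tc f k‖) :
    HasSum (fun k => (mom μ (n + k) : ℂ) * tc f k) (∫ t in Ico (0 : ℝ) 1, t ^ n * f t ∂μ) := by
  have hterm (k : ℕ) : ∫ t in Ico (0 : ℝ) 1, ((t ^ (n + k) : ℝ) : ℂ) * tc f k ∂μ =
      mom μ (n + k) * tc f k := by
    rw [integral_mul_const, integral_complex_ofReal, mom]
  have hnorm (k : ℕ) : ∫ t in Ico (0 : ℝ) 1, ‖((t ^ (n + k) : ℝ) : ℂ) * tc f k‖ ∂μ =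
      ‖(mom μ (n + k) : ℂ) * tc f k‖ := by
    rw [norm_mul, Complex.norm_of_nonneg (mom_nonneg _), mom, ← integral_mul_const]
    refine setIntegral_congr_fun measurableSet_Ico fun t ht => ?_
    simp only [norm_mul, Complex.norm_of_nonneg (pow_nonneg ht.1 _)]
  have hseries (t : ℝ) (ht : t ∈ Ico (0 : ℝ) 1) :
      t ^ n * f t = ∑' k, ((t ^ (n + k) : ℝ) : ℂ) * tc f k := by
    rw [← (hasSum_tc hf (ofReal_mem_ball ht)).tsum_eq, ← tsum_mul_left]
    refine tsum_congr fun k => ?_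
    push_cast
    ring
  have hsum' := hasSum_integral_of_summable_integral_norm
    (fun k => ((integrableOn_pow_Ico (μ := μ) (n + k)).ofReal (𝕜 := ℂ)).mul_const (tc f k))
    (by simpa only [RCLike.ofReal_eq_complex_ofReal, hnorm] using hsum)
  simp only [RCLike.ofReal_eq_complex_ofReal, hterm] at hsum'
  rwa [← setIntegral_congr_fun measurableSet_Ico hseries] at hsum'

lemma hasSum_integral_pow_mul (hf : IntegrableOn (fun t : ℝ => f t) (Ico 0 1) μ) {z : ℂ}
    (hz : z ∈ ball (0 : ℂ) 1) :
    HasSum (fun n : ℕ => (∫ t in Ico (0 : ℝ) 1, t ^ n * f t ∂μ) * z ^ n) (Imu μ f z) := by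
  have hz1 : ‖z‖ < 1 := by simpa using hz
  have hseries (t : ℝ) (ht : t ∈ Ico (0 : ℝ) 1) :
      f t / (1 - t * z) = ∑' n : ℕ, t ^ n * f t * z ^ n := by
    have htz : ‖t * z‖ < 1 := by
      rw [norm_mul, Complex.norm_of_nonneg ht.1]
      exact mul_lt_one_of_nonneg_of_lt_one_left ht.1 ht.2 hz1.le
    rw [div_eq_mul_inv, ← tsum_geometric_of_norm_lt_one htz, ← tsum_mul_left]
    refine tsum_congr fun n => ?_
    ring
  have hint (n : ℕ) : IntegrableOn (fun t : ℝ => t ^ n * f t * z ^ n) (Ico 0 1) μ := by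
    refine (Integrable.bdd_mul hf (c := 1) (by fun_prop) ?_).mul_const _
    refine ae_restrict_of_forall_mem measurableSet_Ico fun t ht => ?_
    rw [norm_pow, Complex.norm_of_nonneg ht.1]
    exact pow_le_one₀ ht.1 ht.2.le
  have hle (n : ℕ) : ∫ t in Ico (0 : ℝ) 1, ‖t ^ n * f t * z ^ n‖ ∂μ ≤
      (∫ t in Ico (0 : ℝ) 1, ‖f t‖ ∂μ) * ‖z‖ ^ n := by
    rw [← integral_mul_const]
    refine setIntegral_mono_on (hint n).norm (hf.norm.mul_const _) measurableSet_Ico fun t ht => ?_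
    rw [norm_mul, norm_mul, norm_pow, norm_pow, Complex.norm_of_nonneg ht.1]
    gcongr
    exact mul_le_of_le_one_left (norm_nonneg _) (pow_le_one₀ ht.1 ht.2.le)
  have hsum := hasSum_integral_of_summable_integral_norm hint
    (Summable.of_nonneg_of_le (fun n => integral_nonneg fun t => norm_nonneg _) hle
      ((summable_geometric_of_lt_one (norm_nonneg z) hz1).mul_left _))
  simp only [integral_mul_const] at hsum
  rwa [← setIntegral_congr_fun measurableSet_Ico hseries] at hsum

lemma lintegral_enorm_comp_circleMap {g : ℂ → ℂ} {r : ℝ} (hg : CircleIntegrable g 0 r) :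
    ∫⁻ θ in Ioc 0 (2 * Real.pi), ‖g (circleMap 0 r θ)‖ₑ =
      ENNReal.ofReal (2 * Real.pi * circleAverage (fun z => ‖g z‖) 0 r) := by
  rw [← ofReal_integral_norm_eq_lintegral_enorm hg.1, Real.circleAverage,
    intervalIntegral.integral_of_le Real.two_pi_pos.le, smul_eq_mul,
    mul_inv_cancel_left₀ Real.two_pi_pos.ne']

lemma lintegral_enorm_inv_one_sub_mul_circleMap_le {s r : ℝ} (hs : s ∈ Ico (0 : ℝ) 1)
    (hr : r ∈ Icc (0 : ℝ) 1) :
    ∫⁻ θ in Ioc 0 (2 * Real.pi), ‖(1 - s * circleMap 0 r θ)⁻¹‖ₑ ≤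
      ENNReal.ofReal (4 * Real.pi) * ENNReal.ofReal (Real.log (2 / (1 - s))) := by
  have hint : CircleIntegrable (fun z => (1 - s * z)⁻¹) 0 r :=
    (Continuous.inv₀ (by fun_prop) (one_sub_mul_circleMap_ne_zero hs hr)).intervalIntegrable _ _
  rw [lintegral_enorm_comp_circleMap hint, ← ENNReal.ofReal_mul (by positivity)]
  refine ENNReal.ofReal_le_ofReal ?_
  simp only [norm_inv]
  have := circleAverage_inv_norm_one_sub_mul_le hs hr
  calc _ ≤ 2 * Real.pi * (2 * Real.log (2 / (1 - s))) := by gcongr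
    _ = _ := by ring

lemma lintegral_enorm_Imu_circleMap_le [SFinite μ] (hf : DifferentiableOn ℂ f (ball 0 1)) {r : ℝ}
    (hr : r ∈ Icc (0 : ℝ) 1) :
    ∫⁻ θ in Ioc 0 (2 * Real.pi), ‖Imu μ f (circleMap 0 r θ)‖ₑ ≤
      ENNReal.ofReal (4 * Real.pi) *
        ∫⁻ t in Ico (0 : ℝ) 1, ‖f t‖ₑ * ENNReal.ofReal (Real.log (2 / (1 - t))) ∂μ := by
  have hmeas : AEMeasurable (Function.uncurry fun θ t : ℝ => ‖f t / (1 - t * circleMap 0 r θ)‖ₑ)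
      ((volume.restrict (Ioc 0 (2 * Real.pi))).prod (μ.restrict (Ico 0 1))) := by
    have := ((continuousOn_comp_ofReal hf).aemeasurable (μ := μ) measurableSet_Ico).comp_snd
      (μ := volume.restrict (Ioc 0 (2 * Real.pi)))
    exact (this.div (by fun_prop)).enorm
  have hkernel (t : ℝ) (ht : t ∈ Ico (0 : ℝ) 1) :
      ∫⁻ θ in Ioc 0 (2 * Real.pi), ‖f t / (1 - t * circleMap 0 r θ)‖ₑ ≤
        ENNReal.ofReal (4 * Real.pi) * (‖f t‖ₑ * ENNReal.ofReal (Real.log (2 / (1 - t)))) := by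
    simp only [div_eq_mul_inv, enorm_mul]
    rw [lintegral_const_mul' _ _ enorm_ne_top, mul_left_comm]
    gcongr
    exact lintegral_enorm_inv_one_sub_mul_circleMap_le ht hr
  calc ∫⁻ θ in Ioc 0 (2 * Real.pi), ‖Imu μ f (circleMap 0 r θ)‖ₑ
      ≤ ∫⁻ θ in Ioc 0 (2 * Real.pi), (∫⁻ t in Ico (0 : ℝ) 1,
          ‖f t / (1 - t * circleMap 0 r θ)‖ₑ ∂μ) :=
        lintegral_mono fun θ => enorm_integral_le_lintegral_enorm _
    _ = ∫⁻ t in Ico (0 : ℝ) 1, (∫⁻ θ in Ioc 0 (2 * Real.pi),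
          ‖f t / (1 - t * circleMap 0 r θ)‖ₑ) ∂μ := lintegral_lintegral_swap hmeas
    _ ≤ _ := by
        rw [← lintegral_const_mul' _ _ ENNReal.ofReal_ne_top]
        exact setLIntegral_mono' measurableSet_Ico hkernel

end IntegralOperator

section Sufficiency

variable {μ : Measure ℝ} [IsFiniteMeasure μ] {f : ℂ → ℂ} {C : ℝ} (hC : 0 ≤ C)
  (h : ∀ s ∈ Ico (0 : ℝ) 1, μ.real (Ico s 1) * Real.log (2 / (1 - s)) ≤ C * (1 - s))
include hC h

lemma MemHardy.integrableOn_comp_ofReal (hf : MemHardy 1 f) :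
    IntegrableOn (fun t : ℝ => f t) (Ico 0 1) μ := by
  refine ⟨(continuousOn_comp_ofReal hf.1).aestronglyMeasurable measurableSet_Ico, ?_⟩
  exact (setLIntegral_le_two_mul_setLIntegral_mul_log _).trans_lt <| ENNReal.mul_lt_top (by simp)
    ((hf.setLIntegral_enorm_mul_log_le hC h).trans_lt ENNReal.ofReal_lt_top)

lemma MemHardy.hasSum_hmuCoeff_mul_pow (hf : MemHardy 1 f) {z : ℂ} (hz : z ∈ ball (0 : ℂ) 1) :
    HasSum (fun n => hmuCoeff μ f n * z ^ n) (Imu μ f z) := by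
  have hcoeff (n : ℕ) : hmuCoeff μ f n = ∫ t in Ico (0 : ℝ) 1, t ^ n * f t ∂μ :=
    (hasSum_mom_mul_tc hf.1 (hf.summable_norm_mom_mul_tc hC h n)).tsum_eq
  simpa only [hcoeff] using hasSum_integral_pow_mul (hf.integrableOn_comp_ofReal hC h) hz

lemma MemHardy.hmuWD (hf : MemHardy 1 f) : HmuWD μ f :=
  ⟨hf.summable_norm_mom_mul_tc hC h, fun _ hz =>
    (hf.hasSum_hmuCoeff_mul_pow hC h hz).summable.norm⟩

lemma MemHardy.differentiableOn_Hmu (hf : MemHardy 1 f) :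
    DifferentiableOn ℂ (Hmu μ f) (ball 0 1) :=
  differentiableOn_ball_of_hasSum fun _ hz =>
    (hf.hasSum_hmuCoeff_mul_pow hC h hz).summable.hasSum

lemma MemHardy.circMean_Hmu_le (hf : MemHardy 1 f) {r : ℝ} (hr : r ∈ Ico (0 : ℝ) 1) :
    circMean 1 (Hmu μ f) r ≤ 48 * C * hardyNorm 1 f := by
  have hball (θ : ℝ) : circleMap 0 r θ ∈ ball (0 : ℂ) 1 := by
    simpa [abs_of_nonneg hr.1] using hr.2
  have hint : CircleIntegrable (Hmu μ f) 0 r :=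
    ((hf.differentiableOn_Hmu hC h).continuousOn.comp_continuous (continuous_circleMap 0 r)
      hball).intervalIntegrable 0 (2 * Real.pi)
  have hle : ENNReal.ofReal (2 * Real.pi * circMean 1 (Hmu μ f) r) ≤
      ENNReal.ofReal (2 * Real.pi * (48 * C * hardyNorm 1 f)) :=
    calc ENNReal.ofReal (2 * Real.pi * circMean 1 (Hmu μ f) r)
        = ∫⁻ θ in Ioc 0 (2 * Real.pi), ‖Imu μ f (circleMap 0 r θ)‖ₑ := by
          rw [circMean_one_eq_circleAverage, ← lintegral_enorm_comp_circleMap hint]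
          refine lintegral_congr fun θ => ?_
          rw [Hmu, (hf.hasSum_hmuCoeff_mul_pow hC h (hball θ)).tsum_eq]
      _ ≤ ENNReal.ofReal (4 * Real.pi) * ENNReal.ofReal (24 * C * hardyNorm 1 f) := by
          refine (lintegral_enorm_Imu_circleMap_le hf.1 ⟨hr.1, hr.2.le⟩).trans ?_
          gcongr
          exact hf.setLIntegral_enorm_mul_log_le hC h
      _ = ENNReal.ofReal (2 * Real.pi * (48 * C * hardyNorm 1 f)) := by
          rw [← ENNReal.ofReal_mul (by positivity)]
          ring_nf
  have hnorm : 0 ≤ hardyNorm 1 f := by simpa using hf.sum_norm_tc_div_le 0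
  exact le_of_mul_le_mul_left ((ENNReal.ofReal_le_ofReal_iff (by positivity)).1 hle)
    Real.two_pi_pos

end Sufficiency

section Necessity

variable {μ : Measure ℝ} {a C : ℝ}

lemma hasSum_succ_mul_pow {𝕜 : Type*} [NormedDivisionRing 𝕜] [HasSummableGeomSeries 𝕜] {x : 𝕜}
    (hx : ‖x‖ < 1) : HasSum (fun n : ℕ => (n + 1) * x ^ n) (1 / (1 - x) ^ 2) := by
  simpa using hasSum_choose_mul_geometric_of_norm_lt_one 1 hx

/-- The test functions `f_a(z) = (1 - a²) / (1 - a z)²`, normalised in `H^1` and concentrating at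
the boundary point `1` as `a → 1`. -/
def testFun (a : ℝ) (z : ℂ) : ℂ := (1 - a ^ 2) / (1 - a * z) ^ 2

lemma hasSum_testFun (ha : a ∈ Ico (0 : ℝ) 1) {z : ℂ} (hz : z ∈ ball (0 : ℂ) 1) :
    HasSum (fun n : ℕ => (((1 - a ^ 2) * (n + 1) * a ^ n : ℝ) : ℂ) * z ^ n) (testFun a z) := by
  have haz : ‖a * z‖ < 1 := by
    rw [norm_mul, Complex.norm_of_nonneg ha.1]
    exact mul_lt_one_of_nonneg_of_lt_one_left ha.1 ha.2 (mem_ball_zero_iff.1 hz).le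
  have hgeom := (hasSum_succ_mul_pow haz).mul_left (1 - (a : ℂ) ^ 2)
  rw [mul_one_div] at hgeom
  refine hgeom.congr_fun fun n => ?_
  push_cast
  ring

lemma tc_testFun (ha : a ∈ Ico (0 : ℝ) 1) (n : ℕ) :
    tc (testFun a) n = ((1 - a ^ 2) * (n + 1) * a ^ n : ℝ) :=
  congrFun (tc_eq_of_hasSum fun _ hz => hasSum_testFun ha hz) n

lemma circMean_testFun_le_one (ha : a ∈ Ico (0 : ℝ) 1) {r : ℝ} (hr : r ∈ Ico (0 : ℝ) 1) :
    circMean 1 (testFun a) r ≤ 1 := by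
  have hr' : r ∈ Icc (0 : ℝ) 1 := ⟨hr.1, hr.2.le⟩
  have ha2 : 0 < 1 - a ^ 2 := by nlinarith [ha.1, ha.2]
  have har : (a * r) ^ 2 ≤ a ^ 2 := by
    rw [mul_pow]
    exact mul_le_of_le_one_right (sq_nonneg a) (pow_le_one₀ hr.1 hr.2.le)
  have hnorm : (fun z => ‖testFun a z‖) = fun z : ℂ => (1 - a ^ 2) • (‖1 - a * z‖ ^ 2)⁻¹ := by
    ext z
    rw [testFun, norm_div, norm_pow, smul_eq_mul, div_eq_mul_inv, ← Complex.norm_of_nonneg ha2.le]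
    push_cast
    rfl
  rw [circMean_one_eq_circleAverage, hnorm, Real.circleAverage_fun_smul,
    circleAverage_inv_norm_one_sub_mul_sq (norm_ofReal_mul_ofReal_lt_one ha hr'), norm_mul,
    Complex.norm_of_nonneg ha.1, Complex.norm_of_nonneg hr.1, smul_eq_mul, ← div_eq_mul_inv]
  exact div_le_one_of_le₀ (by linarith) (by linarith)

lemma memHardy_testFun (ha : a ∈ Ico (0 : ℝ) 1) : MemHardy 1 (testFun a) :=
  ⟨differentiableOn_ball_of_hasSum fun _ hz => hasSum_testFun ha hz, 1,
    fun _ hr => circMean_testFun_le_one ha hr⟩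

lemma hardyNorm_testFun_le_one (ha : a ∈ Ico (0 : ℝ) 1) : hardyNorm 1 (testFun a) ≤ 1 :=
  hardyNorm_le fun _ hr => circMean_testFun_le_one ha hr

lemma pow_mul_measureReal_Ico_le_mom [IsFiniteMeasure μ] (ha : a ∈ Ico (0 : ℝ) 1) (n : ℕ) :
    a ^ n * μ.real (Ico a 1) ≤ mom μ n := by
  have hsub : Ico a 1 ⊆ Ico 0 1 := Ico_subset_Ico_left ha.1
  calc a ^ n * μ.real (Ico a 1) = ∫ _ in Ico a 1, a ^ n ∂μ := by
        rw [setIntegral_const, smul_eq_mul, mul_comm]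
    _ ≤ ∫ t in Ico a 1, t ^ n ∂μ :=
        setIntegral_mono_on (integrableOn_const (measure_ne_top μ _))
          ((integrableOn_pow_Ico n).mono_set hsub) measurableSet_Ico
          fun _ ht => pow_le_pow_left₀ ha.1 ht.1 n
    _ ≤ mom μ n := setIntegral_mono_set (integrableOn_pow_Ico n)
        (ae_restrict_of_forall_mem measurableSet_Ico fun _ ht => pow_nonneg ht.1 n)
        hsub.eventuallyLE

lemma pow_mul_measureReal_Ico_div_le_norm_hmuCoeff_testFun [IsFiniteMeasure μ]
    (ha : a ∈ Ico (0 : ℝ) 1) (hwd : HmuWD μ (testFun a)) (n : ℕ) :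
    a ^ n * μ.real (Ico a 1) / (1 - a ^ 2) ≤ ‖hmuCoeff μ (testFun a) n‖ := by
  have ha2 : a ^ 2 < 1 := pow_lt_one₀ ha.1 ha.2 two_ne_zero
  have hterm (k : ℕ) : (mom μ (n + k) : ℂ) * tc (testFun a) k =
      ((mom μ (n + k) * ((1 - a ^ 2) * (k + 1) * a ^ k) : ℝ) : ℂ) := by
    rw [tc_testFun ha]
    push_cast
    ring
  have hsum : Summable fun k => mom μ (n + k) * ((1 - a ^ 2) * (k + 1) * a ^ k) := by
    rw [← Complex.summable_ofReal]
    simpa only [hterm] using (hwd.1 n).of_norm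
  have hgeom := (hasSum_succ_mul_pow (x := a ^ 2) (by simpa using ha2)).mul_left
    (a ^ n * μ.real (Ico a 1) * (1 - a ^ 2))
  calc a ^ n * μ.real (Ico a 1) / (1 - a ^ 2)
      = a ^ n * μ.real (Ico a 1) * (1 - a ^ 2) * (1 / (1 - a ^ 2) ^ 2) := by
        have := (sub_pos.2 ha2).ne'
        field_simp
    _ ≤ ∑' k, mom μ (n + k) * ((1 - a ^ 2) * (k + 1) * a ^ k) := by
        refine hasSum_le (fun k => ?_) hgeom hsum.hasSum
        have hmom := pow_mul_measureReal_Ico_le_mom (μ := μ) ha (n + k)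
        have ha0 := ha.1
        have := sub_pos.2 ha2
        calc _ = a ^ (n + k) * μ.real (Ico a 1) * ((1 - a ^ 2) * (k + 1) * a ^ k) := by ring
          _ ≤ _ := by gcongr
    _ ≤ ‖hmuCoeff μ (testFun a) n‖ := by
        simp only [hmuCoeff, hterm, ← Complex.ofReal_tsum, Complex.norm_real]
        exact le_abs_self _

lemma tc_Hmu {f : ℂ → ℂ} (hwd : HmuWD μ f) : tc (Hmu μ f) = hmuCoeff μ f :=
  tc_eq_of_hasSum fun z hz => (hwd.2 z hz).of_norm.hasSum

lemma sum_pow_div_mul_measureReal_Ico_le [IsFiniteMeasure μ] (ha : a ∈ Ico (0 : ℝ) 1)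
    (hwd : HmuWD μ (testFun a)) (hmem : MemHardy 1 (Hmu μ (testFun a))) (N : ℕ) :
    (∑ n ∈ Finset.range N, a ^ n / (n + 1)) * μ.real (Ico a 1) ≤
      8 * (1 - a ^ 2) * hardyNorm 1 (Hmu μ (testFun a)) := by
  have ha2 : 0 < 1 - a ^ 2 := sub_pos.2 (pow_lt_one₀ ha.1 ha.2 two_ne_zero)
  have hle : (∑ n ∈ Finset.range N, a ^ n / (n + 1)) * μ.real (Ico a 1) / (1 - a ^ 2) ≤
      8 * hardyNorm 1 (Hmu μ (testFun a)) := by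
    refine le_trans ?_ (hmem.sum_norm_tc_div_le N)
    rw [tc_Hmu hwd, Finset.sum_mul, Finset.sum_div]
    refine Finset.sum_le_sum fun n _ => ?_
    calc _ = a ^ n * μ.real (Ico a 1) / (1 - a ^ 2) / (n + 1) := by ring
      _ ≤ _ := by
        gcongr
        exact pow_mul_measureReal_Ico_div_le_norm_hmuCoeff_testFun ha hwd n
  linarith [(div_le_iff₀ ha2).1 hle]

lemma mul_log_two_div_one_sub_le {m B : ℝ} (ha : a ∈ Ico (0 : ℝ) 1) (hm : 0 ≤ m)
    (h : ∀ N, (∑ n ∈ Finset.range N, a ^ n / (n + 1)) * m ≤ B) :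
    m * Real.log (2 / (1 - a)) ≤ 2 * B := by
  have hlog : -Real.log (1 - a) * m ≤ B := by
    refine le_of_tendsto ((Real.hasSum_pow_div_log_of_abs_lt_one
      (by rw [abs_of_nonneg ha.1]; exact ha.2)).tendsto_sum_nat.mul_const m)
      (.of_forall fun N => le_trans ?_ (h N))
    gcongr ?_ * m
    refine Finset.sum_le_sum fun n _ => ?_
    gcongr ?_ / _
    exact pow_le_pow_of_le_one ha.1 ha.2.le n.le_succ
  have hone : m ≤ B := by simpa using h 1
  rw [Real.log_div two_ne_zero (sub_pos.2 ha.2).ne']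
  nlinarith [Real.log_two_lt_d9]

lemma measureReal_Ico_mul_log_le [IsFiniteMeasure μ] (hC : 0 ≤ C) (ha : a ∈ Ico (0 : ℝ) 1)
    (hwd : HmuWD μ (testFun a)) (hmem : MemHardy 1 (Hmu μ (testFun a)))
    (hnorm : hardyNorm 1 (Hmu μ (testFun a)) ≤ C * hardyNorm 1 (testFun a)) :
    μ.real (Ico a 1) * Real.log (2 / (1 - a)) ≤ 32 * C * (1 - a) := by
  have hC' : hardyNorm 1 (Hmu μ (testFun a)) ≤ C :=
    hnorm.trans (mul_le_of_le_one_right hC (hardyNorm_testFun_le_one ha))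
  have ha2 : 0 ≤ 1 - a ^ 2 := sub_nonneg.2 (pow_le_one₀ ha.1 ha.2.le)
  calc μ.real (Ico a 1) * Real.log (2 / (1 - a))
      ≤ 2 * (8 * (1 - a ^ 2) * hardyNorm 1 (Hmu μ (testFun a))) :=
        mul_log_two_div_one_sub_le ha measureReal_nonneg
          (sum_pow_div_mul_measureReal_Ico_le ha hwd hmem)
    _ ≤ 2 * (8 * (1 - a ^ 2) * C) := by gcongr
    _ ≤ 32 * C * (1 - a) := by nlinarith [mul_nonneg hC (sq_nonneg (1 - a))]

end Necessity

/-- Theorem 1.4 (i): `H_μ` is well defined and bounded on `H^1` iff `μ` is a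
`1`-logarithmic `1`-Carleson measure. -/
theorem hmu_bounded_H1_iff (μ : Measure ℝ) [IsFiniteMeasure μ]
    (hsupp : μ (Ico (0:ℝ) 1)ᶜ = 0) :
    ((∀ f : ℂ → ℂ, MemHardy 1 f → HmuWD μ f ∧ MemHardy 1 (Hmu μ f)) ∧
      ∃ C > 0, ∀ f : ℂ → ℂ, MemHardy 1 f → hardyNorm 1 (Hmu μ f) ≤ C * hardyNorm 1 f) ↔
    IsLogCarleson μ 1 1 := by
  simp only [IsLogCarleson, Real.rpow_one]
  constructor
  · rintro ⟨hwd, C, hC, hnorm⟩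
    refine ⟨32 * C, by positivity, fun a ha => ?_⟩
    have htest := memHardy_testFun ha
    exact measureReal_Ico_mul_log_le hC.le ha (hwd _ htest).1 (hwd _ htest).2 (hnorm _ htest)
  · rintro ⟨C, hC, hμ⟩
    have hmean (f) (hf : MemHardy 1 f) (r) (hr : r ∈ Ico (0 : ℝ) 1) :
        circMean 1 (Hmu μ f) r ≤ 48 * C * hardyNorm 1 f := hf.circMean_Hmu_le hC.le hμ hr
    exact ⟨fun f hf => ⟨hf.hmuWD hC.le hμ, hf.differentiableOn_Hmu hC.le hμ, _, hmean f hf⟩,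
      48 * C, by positivity, fun f hf => hardyNorm_le (hmean f hf)⟩

end PaperHankel
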